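/- Let F be a field of characteristic not p, A a set of central division F-algebras of degree p, and S a set of field extensions of F of degree p. Then there exists a field extension E/F such that: (1) the restriction Br(F)[p] → Br(E)[p] is injective; and (2) for every D ∈ A and every L ∈ S, the compositum EL splits D ⊗_F E. -/

import Mathlib

open scoped TensorProduct
universe u

/-- A finite-dimensional `F`-algebra is *split* if it is a matrix algebra over `F`. -/
def IsSplit (F : Type u) [Field F] (A : Type u) [Ring A] [Algebra F A] : Prop :=
  ∃ n : ℕ, 0 < n ∧ Nonempty (A ≃ₐ[F] Matrix (Fin n) (Fin n) F)

/-- Brauer equivalence of two `F`-algebras. -/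
def BrauerEquiv (F : Type u) [Field F] (A B : Type u) [Ring A] [Algebra F A]
    [Ring B] [Algebra F B] : Prop :=
  ∃ n m : ℕ, 0 < n ∧ 0 < m ∧ Nonempty (Matrix (Fin n) (Fin n) A ≃ₐ[F] Matrix (Fin m) (Fin m) B)

/-- `A` is a finite-dimensional central simple `F`-algebra. -/
def IsCSA (F A : Type u) [Field F] [Ring A] [Algebra F A] : Prop :=
  Algebra.IsCentral F A ∧ IsSimpleRing A ∧ FiniteDimensional F A

/-- The `n`-fold tensor power of an `F`-algebra. -/
abbrev tpow (F : Type u) [Field F] (A : Type u) [Ring A] [Algebra F A] (n : ℕ) : Type u :=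
  ⨂[F] _ : Fin n, A

/-- The Brauer class of `A` is killed by `p`: its `p`-th tensor power is split. -/
def IsPTorsion (F : Type u) [Field F] (A : Type u) [Ring A] [Algebra F A] (p : ℕ) : Prop :=
  IsSplit F (tpow F A p)

/-- The restriction map `Br(F)[p] → Br(E)[p]` along `f : F →+* E` is injective:
two `p`-torsion Brauer classes that agree after scalar extension agree already over `F`. -/
def ResInjP (p : ℕ) (F E : Type u) [Field F] [Field E] (f : F →+* E) : Prop :=
  letI : Algebra F E := f.toAlgebra
  ∀ (A B : Type u) [Ring A] [Algebra F A] [Ring B] [Algebra F B],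
    IsCSA F A → IsCSA F B → IsPTorsion F A p → IsPTorsion F B p →
    BrauerEquiv E (E ⊗[F] A) (E ⊗[F] B) → BrauerEquiv F A B

/-- The restriction map `Br(F) → Br(E)` along `f : F →+* E` is injective. -/
def ResInj (F E : Type u) [Field F] [Field E] (f : F →+* E) : Prop :=
  letI : Algebra F E := f.toAlgebra
  ∀ (A B : Type u) [Ring A] [Algebra F A] [Ring B] [Algebra F B],
    IsCSA F A → IsCSA F B →
    BrauerEquiv E (E ⊗[F] A) (E ⊗[F] B) → BrauerEquiv F A B

/-- `D` is a central division algebra of degree `p` over `K`. -/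
def IsCentralDivisionOfDeg (K D : Type u) [Field K] [DivisionRing D] [Algebra K D]
    (p : ℕ) : Prop :=
  Algebra.IsCentral K D ∧ FiniteDimensional K D ∧ Module.finrank K D = p ^ 2

/-- Witness for STATEMENT 9: a field extension `E/F` with injective restriction on
`p`-torsion Brauer classes, and for every pair `(D i, L j)` a compositum `N i j = E·(L j)`
splitting `(D i) ⊗_F E`. -/
structure SplittingExtensionFamily (p : ℕ) (F : Type u) [Field F] {ι μ : Type u}
    (D : ι → Type u) [∀ i, DivisionRing (D i)] [∀ i, Algebra F (D i)]
    (L : μ → Type u) [∀ j, Field (L j)] [∀ j, Algebra F (L j)] : Type (u + 1) where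
  E : Type u
  [fieldE : Field E]
  [algFE : Algebra F E]
  resInj : ResInjP p F E (algebraMap F E)
  /-- the composita `E · (L j)` -/
  N : ι → μ → Type u
  [fieldN : ∀ i j, Field (N i j)]
  [algFN : ∀ i j, Algebra F (N i j)]
  [algEN : ∀ i j, Algebra E (N i j)]
  [algLN : ∀ i j, Algebra (L j) (N i j)]
  [towerE : ∀ i j, IsScalarTower F E (N i j)]
  [towerL : ∀ i j, IsScalarTower F (L j) (N i j)]
  compositum : ∀ i j, Algebra.adjoin E (Set.range (algebraMap (L j) (N i j))) = ⊤
  splits : ∀ i j, IsSplit (N i j) ((N i j) ⊗[F] (D i))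


section CSAfacts

lemma sandwich {F A : Type*} [Field F] [Ring A] [Algebra F A]
    [Algebra.IsCentral F A] [IsSimpleRing A] [FiniteDimensional F A] (φ : A →ₗ[F] A) :
    ∃ z : A ⊗[F] Aᵐᵒᵖ, AlgHom.mulLeftRight F A z = φ := by
  let _ : Module (A ⊗[F] Aᵐᵒᵖ) A := instModuleTensorProductMop F A
  have hsm : ∀ (a : A) (b : Aᵐᵒᵖ) (x : A), (a ⊗ₜ[F] b : A ⊗[F] Aᵐᵒᵖ) • x = a * x * b.unop := by
    intro a b x
    exact AlgHom.mulLeftRight_apply F A a b x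
  have hsm' : ∀ (z : A ⊗[F] Aᵐᵒᵖ) (x : A), z • x = AlgHom.mulLeftRight F A z x := fun z x => rfl
  have : IsSimpleModule (A ⊗[F] Aᵐᵒᵖ) A := by
    rw [isSimpleModule_iff]
    refine { exists_pair_ne := ⟨⊥, ⊤, bot_ne_top⟩, eq_bot_or_eq_top := fun N => ?_ }
    let I : TwoSidedIdeal A := .mk' (N : Set A) N.zero_mem N.add_mem N.neg_mem
      (by
        intro x y hy
        have := N.smul_mem (x ⊗ₜ 1) hy
        simpa [hsm] using this)
      (by
        intro x y hx
        have := N.smul_mem (1 ⊗ₜ MulOpposite.op y) hx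
        simpa [hsm] using this)
    have hI : ∀ x, x ∈ I ↔ x ∈ N := fun x => TwoSidedIdeal.mem_mk' ..
    rcases eq_bot_or_eq_top I with h | h
    · left
      rw [eq_bot_iff]
      intro x hx
      have := (hI x).2 hx
      rw [h] at this
      simpa using this
    · right
      rw [eq_top_iff]
      intro x _
      rw [← hI, h]; trivial
  let f : Module.End (Module.End (A ⊗[F] Aᵐᵒᵖ) A) A :=
    { toFun := φ
      map_add' := map_add φ
      map_smul' := by
        intro e x
        have h1 : ∀ y : A, e y = e 1 * y := by
          intro y
          have := e.map_smul (1 ⊗ₜ MulOpposite.op y) 1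
          simpa [hsm] using this
        have h2 : ∀ y : A, e y = y * e 1 := by
          intro y
          have := e.map_smul (y ⊗ₜ 1) 1
          simpa [hsm] using this
        have h3 : e 1 ∈ Subalgebra.center F A := by
          rw [Subalgebra.mem_center_iff]
          intro y
          rw [← h1, ← h2]
        obtain ⟨c, hc⟩ := Algebra.IsCentral.mem_center_iff F |>.1 h3
        simp only [Module.End.smul_def, RingHom.id_apply, h1 x, h1 (φ x)]
        simp [hc, ← Algebra.smul_def] }
  let b := Module.finBasis F A
  classical
  obtain ⟨r, hr⟩ := jacobson_density (R := A ⊗[F] Aᵐᵒᵖ) f (Finset.univ.image b)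
  refine ⟨r, b.ext fun i => ?_⟩
  rw [← hsm']
  exact (hr (b i) (by simp)).symm


lemma sandwich_tensor {F A R : Type*} [Field F] [Ring A] [Algebra F A] [Ring R] [Algebra F R]
    [Algebra.IsCentral F A] [IsSimpleRing A] [FiniteDimensional F A] (φ : A →ₗ[F] A) :
    ∃ S : Finset (A × Aᵐᵒᵖ), (∀ x, φ x = ∑ i ∈ S, i.1 * x * i.2.unop) ∧
      ∀ z : R ⊗[F] A, LinearMap.lTensor R φ z =
        ∑ i ∈ S, ((1 : R) ⊗ₜ[F] i.1) * z * ((1 : R) ⊗ₜ[F] i.2.unop) := by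
  obtain ⟨w, hw⟩ := sandwich φ
  obtain ⟨S, hS⟩ := TensorProduct.exists_finset w
  have h1 : ∀ x, φ x = ∑ i ∈ S, i.1 * x * i.2.unop := by
    intro x
    rw [← hw, hS]
    simp [map_sum]
  refine ⟨S, h1, fun z => ?_⟩
  induction z with
  | zero => simp
  | tmul r a => simp [h1, TensorProduct.tmul_sum]
  | add x y hx hy => simp [hx, hy, mul_add, add_mul, Finset.sum_add_distrib]

lemma tensor_isSimple {F A R : Type*} [Field F] [Ring A] [Algebra F A] [Ring R] [Algebra F R]
    [Algebra.IsCentral F A] [IsSimpleRing A] [FiniteDimensional F A] [IsSimpleRing R] :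
    IsSimpleRing (R ⊗[F] A) := by
  have : Nontrivial (R ⊗[F] A) := inferInstance
  refine ⟨{ exists_pair_ne := ⟨⊥, ⊤, bot_ne_top⟩, eq_bot_or_eq_top := fun I => ?_ }⟩
  by_cases hI : I = ⊥
  · exact Or.inl hI
  right
  obtain ⟨z, hz, hz0⟩ : ∃ z ∈ I, z ≠ 0 := by
    by_contra! h
    exact hI (eq_bot_iff.2 fun x hx => by simpa using h x hx)
  let b := Module.finBasis F A
  obtain ⟨i, hi⟩ : ∃ i, TensorProduct.equivFinsuppOfBasisRight b z i ≠ 0 := by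
    by_contra! h
    apply hz0
    apply (TensorProduct.equivFinsuppOfBasisRight (M := R) b).injective
    ext i
    simp [h i]
  let r := TensorProduct.equivFinsuppOfBasisRight b z i
  obtain ⟨S, -, hS⟩ := sandwich_tensor (R := R) ((Algebra.linearMap F A) ∘ₗ b.coord i)
  have hr : LinearMap.lTensor R ((Algebra.linearMap F A) ∘ₗ b.coord i) z = r ⊗ₜ 1 := by
    have : ∀ z : R ⊗[F] A, LinearMap.lTensor R ((Algebra.linearMap F A) ∘ₗ b.coord i) z =
        (TensorProduct.equivFinsuppOfBasisRight b z i) ⊗ₜ 1 := by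
      intro z
      induction z with
      | zero => simp
      | tmul r a =>
        simp [Algebra.algebraMap_eq_smul_one, TensorProduct.smul_tmul]
      | add x y hx hy => simp [hx, hy, TensorProduct.add_tmul]
    exact this z
  have hrI : (r ⊗ₜ[F] (1 : A)) ∈ I := by
    rw [← hr, hS]
    exact sum_mem fun j _ => I.mul_mem_right _ _ (I.mul_mem_left _ _ hz)
  let J : TwoSidedIdeal R := I.comap (Algebra.TensorProduct.includeLeft : R →ₐ[F] R ⊗[F] A)
  have hJ : ∀ x, x ∈ J ↔ (x ⊗ₜ[F] (1 : A)) ∈ I := fun x => by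
    simp [J, TwoSidedIdeal.mem_comap]
  have hJtop : J = ⊤ := by
    rcases eq_bot_or_eq_top J with h | h
    · exfalso
      have := (hJ r).2 hrI
      rw [h] at this
      exact hi (by simpa using this)
    · exact h
  have h1 : (1 : R ⊗[F] A) ∈ I := by
    rw [Algebra.TensorProduct.one_def, ← hJ, hJtop]
    trivial
  rw [eq_top_iff]
  intro x _
  simpa using I.mul_mem_left x 1 h1

lemma tensor_center {F A R : Type*} [Field F] [Ring A] [Algebra F A] [Ring R] [Algebra F R]
    [Algebra.IsCentral F A] [IsSimpleRing A] [FiniteDimensional F A] (z : R ⊗[F] A)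
    (hz : ∀ w, w * z = z * w) : ∃ r : R, z = r ⊗ₜ 1 := by
  obtain ⟨f, hf⟩ : ∃ f : A →ₗ[F] F, f 1 = 1 := by
    obtain ⟨f, hf⟩ := (Algebra.linearMap F A).exists_leftInverse_of_injective
      (LinearMap.ker_eq_bot.2 (by exact FaithfulSMul.algebraMap_injective F A))
    refine ⟨f, ?_⟩
    have := LinearMap.congr_fun hf 1
    simpa using this
  obtain ⟨S, h1, hS⟩ := sandwich_tensor (R := R) ((Algebra.linearMap F A) ∘ₗ f)
  have h2 := h1 1
  have h3 : LinearMap.lTensor R ((Algebra.linearMap F A) ∘ₗ f) z = z := by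
    rw [hS]
    have : ∀ i ∈ S, ((1 : R) ⊗ₜ[F] i.1) * z * ((1 : R) ⊗ₜ[F] i.2.unop) =
        z * ((1 : R) ⊗ₜ[F] (i.1 * 1 * i.2.unop)) := by
      intro i _
      rw [hz, mul_assoc]
      simp
    rw [Finset.sum_congr rfl this, ← Finset.mul_sum, ← TensorProduct.tmul_sum, ← h2]
    simp [hf, ← Algebra.TensorProduct.one_def]
  have : ∀ z : R ⊗[F] A, ∃ r : R,
      LinearMap.lTensor R ((Algebra.linearMap F A) ∘ₗ f) z = r ⊗ₜ 1 := by
    intro z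
    induction z with
    | zero => exact ⟨0, by simp⟩
    | tmul r a =>
      exact ⟨f a • r, by simp [Algebra.algebraMap_eq_smul_one, TensorProduct.smul_tmul]⟩
    | add x y hx hy =>
      obtain ⟨a, ha⟩ := hx
      obtain ⟨b, hb⟩ := hy
      exact ⟨a + b, by simp [ha, hb, TensorProduct.add_tmul]⟩
  obtain ⟨r, hr⟩ := this z
  exact ⟨r, by rw [← h3, hr]⟩

lemma baseChange_isCentral {F A K : Type*} [Field F] [Ring A] [Algebra F A] [Field K] [Algebra F K]
    [Algebra.IsCentral F A] [IsSimpleRing A] [FiniteDimensional F A] :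
    Algebra.IsCentral K (K ⊗[F] A) := by
  refine ⟨fun z hz => ?_⟩
  rw [Subalgebra.mem_center_iff] at hz
  obtain ⟨r, hr⟩ := tensor_center z hz
  exact ⟨r, by rw [hr]; simp [Algebra.TensorProduct.algebraMap_apply]⟩

lemma tensor_isCentral {F A B : Type*} [Field F] [Ring A] [Algebra F A] [Ring B] [Algebra F B]
    [Nontrivial A] [Algebra.IsCentral F A]
    [Algebra.IsCentral F B] [IsSimpleRing B] [FiniteDimensional F B] :
    Algebra.IsCentral F (A ⊗[F] B) := by
  refine ⟨fun z hz => ?_⟩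
  rw [Subalgebra.mem_center_iff] at hz
  obtain ⟨r, hr⟩ := tensor_center z hz
  have hc : r ∈ Subalgebra.center F A := by
    rw [Subalgebra.mem_center_iff]
    intro b
    have := hz (b ⊗ₜ 1)
    rw [hr] at this
    apply Algebra.TensorProduct.includeLeft_injective (R := F) (S := F) (A := A) (B := B)
      (FaithfulSMul.algebraMap_injective F B)
    simpa using this
  obtain ⟨c, hc⟩ := Algebra.IsCentral.mem_center_iff F |>.1 hc
  exact ⟨c, by rw [hr, hc]; simp [Algebra.TensorProduct.algebraMap_apply]⟩

end CSAfacts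


section Splitting

variable {F C K : Type*} [Field F] [Ring C] [Algebra F C] [Field K] [Algebra F K] {d : ℕ}

/-- scalar extension of a matrix representation -/
noncomputable def extHom (ρ : C →ₐ[F] Matrix (Fin d) (Fin d) K) :
    K ⊗[F] C →ₐ[K] Matrix (Fin d) (Fin d) K :=
  Algebra.TensorProduct.lift (Algebra.ofId K _) ρ (fun a b => Algebra.commutes a (ρ b))

lemma extHom_tmul (ρ : C →ₐ[F] Matrix (Fin d) (Fin d) K) (k : K) (x : C) :
    extHom ρ (k ⊗ₜ x) = k • ρ x := by
  unfold extHom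
  erw [Algebra.TensorProduct.lift_tmul]
  rw [Algebra.ofId_apply, Algebra.smul_def]

variable [Algebra.IsCentral F C] [IsSimpleRing C] [FiniteDimensional F C]

lemma extHom_bijective (hd : 0 < d) (hC : Module.finrank F C = d ^ 2)
    (ρ : C →ₐ[F] Matrix (Fin d) (Fin d) K) : Function.Bijective (extHom ρ) := by
  have : Nonempty (Fin d) := ⟨⟨0, hd⟩⟩
  have : IsSimpleRing (K ⊗[F] C) := tensor_isSimple
  have hinj : Function.Injective (extHom ρ) := RingHom.injective (extHom ρ).toRingHom
  refine ⟨hinj, ?_⟩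
  have h2 := (LinearMap.injective_iff_surjective_of_finrank_eq_finrank
    (f := (extHom ρ).toLinearMap) ?_).1 hinj
  · exact h2
  · rw [Module.finrank_baseChange, hC, Module.finrank_matrix]
    simp [sq]

lemma scalar_of_commute (hd : 0 < d) (hC : Module.finrank F C = d ^ 2)
    (ρ : C →ₐ[F] Matrix (Fin d) (Fin d) K) (M : Matrix (Fin d) (Fin d) K)
    (hM : ∀ x, ρ x * M = M * ρ x) : ∃ c : K, M = c • (1 : Matrix (Fin d) (Fin d) K) := by
  have hs := (extHom_bijective hd hC ρ).2
  have h : M ∈ Subalgebra.center K (Matrix (Fin d) (Fin d) K) := by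
    rw [Subalgebra.mem_center_iff]
    intro b
    obtain ⟨z, rfl⟩ := hs b
    induction z with
    | zero => simp
    | tmul k x => simp [extHom_tmul, hM]
    | add x y hx hy => simp [add_mul, mul_add, hx, hy]
  obtain ⟨c, hc⟩ := Algebra.IsCentral.mem_center_iff K |>.1 h
  exact ⟨c, by rw [hc, Algebra.algebraMap_eq_smul_one]⟩

lemma matrix_aut_inner (φ : Matrix (Fin d) (Fin d) K ≃ₐ[K] Matrix (Fin d) (Fin d) K) :
    ∃ S : Matrix.GeneralLinearGroup (Fin d) K, ∀ x, φ x * S = S * x := by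
  let e := Matrix.toLinAlgEquiv' (R := K) (n := Fin d)
  obtain ⟨T, hT⟩ := AlgEquiv.eq_linearEquivConjAlgEquiv ((e.symm.trans φ).trans e)
  let S : Matrix.GeneralLinearGroup (Fin d) K :=
    ⟨LinearMap.toMatrix' T.toLinearMap, LinearMap.toMatrix' T.symm.toLinearMap,
      by rw [← LinearMap.toMatrix'_comp]; simp, by rw [← LinearMap.toMatrix'_comp]; simp⟩
  refine ⟨S, fun x => ?_⟩
  have h := congrArg (fun f => f (e x)) hT
  simp only [AlgEquiv.trans_apply, AlgEquiv.symm_apply_apply] at h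
  have h2 : e (φ x) ∘ₗ T.toLinearMap = T.toLinearMap ∘ₗ e x := by
    rw [h]
    ext v
    simp [LinearEquiv.conjAlgEquiv_apply]
  have h3 := congrArg LinearMap.toMatrix' h2
  rw [LinearMap.toMatrix'_comp, LinearMap.toMatrix'_comp] at h3
  have he : ∀ y, LinearMap.toMatrix' (e y) = y := fun y => LinearMap.toMatrix'_toLin' y
  rw [he, he] at h3
  exact h3

lemma skolem_noether (hd : 0 < d) (hC : Module.finrank F C = d ^ 2)
    (ρ r : C →ₐ[F] Matrix (Fin d) (Fin d) K) :
    ∃ S : Matrix.GeneralLinearGroup (Fin d) K, ∀ x, ρ x * S = S * r x := by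
  let e1 := AlgEquiv.ofBijective (extHom ρ) (extHom_bijective hd hC ρ)
  let e2 := AlgEquiv.ofBijective (extHom r) (extHom_bijective hd hC r)
  obtain ⟨S, hS⟩ := matrix_aut_inner (e2.symm.trans e1)
  refine ⟨S, fun x => ?_⟩
  have := hS (r x)
  have h2 : r x = e2 (1 ⊗ₜ x) := by simp [e2, extHom_tmul]
  rw [AlgEquiv.trans_apply] at this
  rw [← this]
  congr 1
  rw [h2, AlgEquiv.symm_apply_apply]
  simp [e1, extHom_tmul]

/-- central simple algebras are split by separably closed fields -/
lemma exists_hom_sepClosed [IsSepClosed K] :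
    ∃ d : ℕ, 0 < d ∧ Module.finrank F C = d ^ 2 ∧
      Nonempty (C →ₐ[F] Matrix (Fin d) (Fin d) K) := by
  have : IsSimpleRing (K ⊗[F] C) := tensor_isSimple
  have : Algebra.IsCentral K (K ⊗[F] C) := baseChange_isCentral
  have : IsArtinianRing (K ⊗[F] C) := IsArtinianRing.of_finite K _
  obtain ⟨n, hn, D, _, _, _, ⟨e⟩⟩ :=
    IsSimpleRing.exists_algEquiv_matrix_divisionRing_finite K (K ⊗[F] C)
  have hcen : Algebra.IsCentral K (Matrix (Fin n) (Fin n) D) := .of_algEquiv K _ _ e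
  have hcen : Algebra.IsCentral K D := by
    have h2 : Algebra.IsCentral K (Matrix (Fin n) (Fin n) K ⊗[K] D) :=
      .of_algEquiv K _ _ ((matrixEquivTensor (Fin n) K D).trans
        (Algebra.TensorProduct.comm K _ _))
    exact Algebra.IsCentral.right_of_tensor_of_field K (Matrix (Fin n) (Fin n) K) D
  have htop : (⊥ : Subalgebra K D) = ⊤ := by
    by_contra hne
    obtain ⟨x, hx, hsep⟩ := JacobsonNoether.exists_separable_and_not_isCentral' hne
    have hintegral : IsIntegral K x := Algebra.IsIntegral.isIntegral x
    have hdeg := IsSepClosed.degree_eq_one_of_irreducible K (minpoly.irreducible hintegral) hsep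
    have := minpoly.mem_range_of_degree_eq_one K x hdeg
    obtain ⟨c, hc⟩ := this
    exact hx ⟨c, hc⟩
  let eD : D ≃ₐ[K] K := ((Algebra.botEquiv K D).symm.trans
    ((Subalgebra.equivOfEq _ _ htop).trans Subalgebra.topEquiv)).symm
  let e' : K ⊗[F] C ≃ₐ[K] Matrix (Fin n) (Fin n) K := e.trans eD.mapMatrix
  refine ⟨n, Nat.pos_of_ne_zero hn.out, ?_, ⟨(e'.toAlgHom.restrictScalars F).comp
    Algebra.TensorProduct.includeRight⟩⟩
  rw [← Module.finrank_baseChange (R := K), e'.toLinearEquiv.finrank_eq, Module.finrank_matrix]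
  simp [sq]

end Splitting

lemma isSplit_of_hom {F C K : Type u} [Field F] [Ring C] [Algebra F C] [Field K] [Algebra F K]
    [Algebra.IsCentral F C] [IsSimpleRing C] [FiniteDimensional F C] {d : ℕ}
    (hd : 0 < d) (hC : Module.finrank F C = d ^ 2)
    (ρ : C →ₐ[F] Matrix (Fin d) (Fin d) K) : IsSplit K (K ⊗[F] C) :=
  ⟨d, hd, ⟨AlgEquiv.ofBijective (extHom ρ) (extHom_bijective hd hC ρ)⟩⟩

lemma equiv_of_hom {F C : Type*} [Field F] [Ring C] [Algebra F C]
    [Algebra.IsCentral F C] [IsSimpleRing C] [FiniteDimensional F C] {d : ℕ}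
    (hd : 0 < d) (hC : Module.finrank F C = d ^ 2)
    (ρ : C →ₐ[F] Matrix (Fin d) (Fin d) F) : Nonempty (C ≃ₐ[F] Matrix (Fin d) (Fin d) F) :=
  ⟨(Algebra.TensorProduct.lid F C).symm.trans
    (AlgEquiv.ofBijective (extHom ρ) (extHom_bijective hd hC ρ))⟩


section BrauerPart

/-- `M_m(R)` acts on column vectors. -/
noncomputable def colAct (E R : Type*) [Field E] [Ring R] [Algebra E R] (m : ℕ) :
    Matrix (Fin m) (Fin m) R →ₐ[E] Module.End E (Fin m → R) where
  toFun M :=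
    { toFun := fun v => M.mulVec v
      map_add' := fun v w => Matrix.mulVec_add M v w
      map_smul' := fun c v => Matrix.mulVec_smul M c v }
  map_one' := LinearMap.ext fun v => Matrix.one_mulVec v
  map_mul' M M' := LinearMap.ext fun v => (Matrix.mulVec_mulVec v M M').symm
  map_zero' := LinearMap.ext fun v => Matrix.zero_mulVec v
  map_add' M M' := LinearMap.ext fun v => Matrix.add_mulVec M M' v
  commutes' c := LinearMap.ext fun v => by
    change (algebraMap E (Matrix (Fin m) (Fin m) R) c).mulVec v = c • v
    rw [Algebra.algebraMap_eq_smul_one, Matrix.smul_mulVec, Matrix.one_mulVec]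

/-- right multiplication action. -/
noncomputable def rightAct (F E B : Type*) [Field F] [Field E] [Algebra F E] [Ring B]
    [Algebra F B] (m : ℕ) : Bᵐᵒᵖ →ₐ[F] Module.End E (Fin m → E ⊗[F] B) where
  toFun b :=
    { toFun := fun v i => v i * (1 ⊗ₜ b.unop)
      map_add' := fun v w => by ext i; simp [add_mul]
      map_smul' := fun c v => by ext i; simp }
  map_one' := LinearMap.ext fun v => by
    ext i
    change v i * (1 ⊗ₜ 1) = v i
    rw [← Algebra.TensorProduct.one_def, mul_one]
  map_mul' b b' := LinearMap.ext fun v => by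
    ext i
    change v i * (1 ⊗ₜ (b'.unop * b.unop)) = v i * (1 ⊗ₜ b'.unop) * (1 ⊗ₜ b.unop)
    simp [mul_assoc]
  map_zero' := LinearMap.ext fun v => by ext i; simp
  map_add' b b' := LinearMap.ext fun v => by ext i; simp [TensorProduct.tmul_add, mul_add]
  commutes' c := LinearMap.ext fun v => by
    ext i
    change v i * (1 ⊗ₜ (algebraMap F B c)) = ((algebraMap F (Module.End E (Fin m → E ⊗[F] B)) c) v) i
    rw [Module.algebraMap_end_apply, Algebra.algebraMap_eq_smul_one, TensorProduct.tmul_smul,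
      ← Algebra.TensorProduct.one_def]
    simp

lemma op_tensor_split (F B : Type*) [Field F] [Ring B] [Algebra F B] [Algebra.IsCentral F B]
    [IsSimpleRing B] [FiniteDimensional F B] :
    Nonempty (Bᵐᵒᵖ ⊗[F] B ≃ₐ[F]
      Matrix (Fin (Module.finrank F B)) (Fin (Module.finrank F B)) F) := by
  have hsurj : Function.Surjective (AlgHom.mulLeftRight F B) := fun φ => sandwich φ
  have hdim : Module.finrank F (B ⊗[F] Bᵐᵒᵖ) = Module.finrank F (Module.End F B) := by
    rw [Module.finrank_tensorProduct, Module.finrank_linearMap, ← (MulOpposite.opLinearEquiv F).finrank_eq]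
  have hinj := (LinearMap.injective_iff_surjective_of_finrank_eq_finrank
    (f := (AlgHom.mulLeftRight F B).toLinearMap) hdim).2 hsurj
  exact ⟨(Algebra.TensorProduct.comm F _ _).trans
    ((AlgEquiv.ofBijective (AlgHom.mulLeftRight F B) ⟨hinj, hsurj⟩).trans
      (LinearMap.toMatrixAlgEquiv (Module.finBasis F B)))⟩

lemma brauer_of_split {F A B : Type u} [Field F] [Ring A] [Algebra F A] [Ring B] [Algebra F B]
    [Algebra.IsCentral F B] [IsSimpleRing B] [FiniteDimensional F B] {n d : ℕ}
    (hn : 0 < n) (hd : 0 < d)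
    (h : (Matrix (Fin n) (Fin n) A) ⊗[F] Bᵐᵒᵖ ≃ₐ[F] Matrix (Fin d) (Fin d) F) :
    BrauerEquiv F A B := by
  obtain ⟨e⟩ := op_tensor_split F B
  have hb : 0 < Module.finrank F B := Module.finrank_pos
  let e1 : Matrix (Fin d) (Fin d) B ≃ₐ[F] (Matrix (Fin n) (Fin n) A ⊗[F] Bᵐᵒᵖ) ⊗[F] B :=
    (matrixEquivTensor (Fin d) F B).trans ((Algebra.TensorProduct.comm F _ _).trans
      (Algebra.TensorProduct.congr h.symm AlgEquiv.refl))
  let e2 := e1.trans (Algebra.TensorProduct.assoc F F F _ _ _)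
  let e3 := e2.trans ((Algebra.TensorProduct.congr (AlgEquiv.refl (R := F)) e).trans
    (matrixEquivTensor (Fin (Module.finrank F B)) F (Matrix (Fin n) (Fin n) A)).symm)
  let e4 := e3.trans (Matrix.compAlgEquiv (Fin (Module.finrank F B)) (Fin n) A F)
  let e5 := e4.trans (Matrix.reindexAlgEquiv F A finProdFinEquiv)
  exact ⟨_, d, Nat.mul_pos hb hn, hd, ⟨e5.symm⟩⟩

lemma res_inj_of_kernel {F E : Type u} [Field F] [Field E] [Algebra F E]
    (H : ∀ (C : Type u) [Ring C] [Algebra F C] [Algebra.IsCentral F C] [IsSimpleRing C]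
      [FiniteDimensional F C] (d : ℕ), 0 < d → Module.finrank F C = d ^ 2 →
      (C →ₐ[F] Matrix (Fin d) (Fin d) E) → Nonempty (C →ₐ[F] Matrix (Fin d) (Fin d) F))
    (A B : Type u) [Ring A] [Algebra F A] [Ring B] [Algebra F B]
    (hA : IsCSA F A) (hB : IsCSA F B)
    (hAB : BrauerEquiv E (E ⊗[F] A) (E ⊗[F] B)) : BrauerEquiv F A B := by
  obtain ⟨_, _, _⟩ := hA
  obtain ⟨_, _, _⟩ := hB
  obtain ⟨n, m, hn, hm, ⟨φ⟩⟩ := hAB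
  have : NeZero n := ⟨hn.ne'⟩
  obtain ⟨a, ha, hAa, -⟩ := exists_hom_sepClosed (F := F) (C := A) (K := SeparableClosure F)
  obtain ⟨b, hb, hBb, -⟩ := exists_hom_sepClosed (F := F) (C := B) (K := SeparableClosure F)
  have hdim : n * a = m * b := by
    have := φ.toLinearEquiv.finrank_eq
    rw [Module.finrank_matrix, Module.finrank_matrix, Module.finrank_baseChange,
      Module.finrank_baseChange, hAa, hBb] at this
    simp only [Fintype.card_fin] at this
    have h2 : (n * a) ^ 2 = (m * b) ^ 2 := by nlinarith
    exact Nat.pow_left_injective (n := 2) (by norm_num) h2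
  have : IsSimpleRing (Matrix (Fin n) (Fin n) A ⊗[F] Bᵐᵒᵖ) := tensor_isSimple
  have : Algebra.IsCentral F (Matrix (Fin n) (Fin n) A ⊗[F] Bᵐᵒᵖ) := tensor_isCentral
  let incl : Matrix (Fin n) (Fin n) A →ₐ[F] Matrix (Fin n) (Fin n) (E ⊗[F] A) :=
    (Algebra.TensorProduct.includeRight : A →ₐ[F] E ⊗[F] A).mapMatrix
  let r1 : Matrix (Fin n) (Fin n) A →ₐ[F] Module.End E (Fin m → E ⊗[F] B) :=
    (((colAct E (E ⊗[F] B) m).comp φ.toAlgHom).restrictScalars F).comp incl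
  let r : Matrix (Fin n) (Fin n) A ⊗[F] Bᵐᵒᵖ →ₐ[F] Module.End E (Fin m → E ⊗[F] B) :=
    Algebra.TensorProduct.lift r1 (rightAct F E B m) (by
      intro x y
      refine LinearMap.ext fun v => ?_
      change (φ (incl x)).mulVec (fun i => v i * _) = fun i => (φ (incl x)).mulVec v i * _
      ext i
      simp only [Matrix.mulVec, dotProduct, Finset.sum_mul, mul_assoc])
  have hV : Module.finrank E (Fin m → E ⊗[F] B) = n * a * b := by
    rw [Module.finrank_pi_fintype]
    simp only [Module.finrank_baseChange, hBb, Finset.sum_const, Finset.card_univ,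
      Fintype.card_fin, smul_eq_mul, hdim]
    ring
  have hpos : 0 < n * a * b := by positivity
  have hC : Module.finrank F (Matrix (Fin n) (Fin n) A ⊗[F] Bᵐᵒᵖ) = (n * a * b) ^ 2 := by
    rw [Module.finrank_tensorProduct, Module.finrank_matrix,
      ← (MulOpposite.opLinearEquiv F (M := B)).finrank_eq, hAa, hBb]
    simp only [Fintype.card_fin]
    ring
  let e := LinearMap.toMatrixAlgEquiv (Module.finBasisOfFinrankEq E (Fin m → E ⊗[F] B) hV)
  obtain ⟨ρ⟩ := H _ (n * a * b) hpos hC ((e.toAlgHom.restrictScalars F).comp r)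
  obtain ⟨e'⟩ := equiv_of_hom hpos hC ρ
  exact brauer_of_split hn hpos e'

end BrauerPart


section Descent

/-- conjugation of a matrix representation -/
noncomputable def conjHom {F C K : Type*} [Field F] [Ring C] [Algebra F C] [Field K] [Algebra F K]
    {d : ℕ} (ρ : C →ₐ[F] Matrix (Fin d) (Fin d) K) (S : Matrix.GeneralLinearGroup (Fin d) K) :
    C →ₐ[F] Matrix (Fin d) (Fin d) K where
  toFun x := (S⁻¹ : Matrix.GeneralLinearGroup (Fin d) K).val * ρ x * S.val
  map_one' := by simp
  map_mul' x y := by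
    have h : S.val * (S⁻¹ : Matrix.GeneralLinearGroup (Fin d) K).val = 1 := Units.mul_inv S
    calc _ = (S⁻¹ : Matrix.GeneralLinearGroup (Fin d) K).val * ρ x * 1 * ρ y * S.val := by
          simp [mul_assoc]
      _ = _ := by rw [← h]; simp only [mul_assoc]
  map_zero' := by simp
  map_add' x y := by simp [mul_add, add_mul]
  commutes' c := by
    rw [AlgHom.commutes, ← Algebra.commutes, mul_assoc]
    have h : (S⁻¹ : Matrix.GeneralLinearGroup (Fin d) K).val * S.val = 1 := Units.inv_mul S
    rw [h, mul_one]

lemma descend_hom {F C K R : Type*} [Field F] [Ring C] [Algebra F C] [Field K] [Algebra F K]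
    [CommRing R] [Algebra F R] (j : R →ₐ[F] K) (hj : Function.Injective j)
    {d : ℕ} (ρ : C →ₐ[F] Matrix (Fin d) (Fin d) K) (S : Matrix.GeneralLinearGroup (Fin d) K)
    (h : ∀ x i k, ((S⁻¹ : Matrix.GeneralLinearGroup (Fin d) K).val * ρ x * S.val) i k ∈
      Set.range j) : Nonempty (C →ₐ[F] Matrix (Fin d) (Fin d) R) := by
  have hinj : Function.Injective (j.mapMatrix (m := Fin d)) := by
    intro M M' hM
    ext i k
    exact hj (congrFun (congrFun hM i) k)
  have hr : ∀ x, conjHom ρ S x ∈ (j.mapMatrix (m := Fin d)).range := by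
    intro x
    choose f hf using h x
    exact ⟨Matrix.of f, by ext i k; exact hf i k⟩
  exact ⟨(AlgEquiv.ofInjective _ hinj).symm.toAlgHom.comp ((conjHom ρ S).codRestrict _ hr)⟩

lemma exists_invertible_cols {K : Type*} [Field K] {d : ℕ} (W : Set (Fin d → K))
    (hW : ∀ w : Fin d → K, (∀ v ∈ W, ∑ i, w i * v i = 0) → w = 0) :
    ∃ S : Matrix.GeneralLinearGroup (Fin d) K, ∀ k, (fun i => S.val i k) ∈ W := by
  have hspan : ⊤ ≤ Submodule.span K W := by
    by_contra hne
    obtain ⟨f, hf, hle⟩ := Submodule.exists_le_ker_of_lt_top _ (lt_top_iff_ne_top.2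
      (fun h => hne h.ge))
    have hfe : ∀ v : Fin d → K, f v = ∑ i, f (Pi.single i 1) * v i := by
      intro v
      conv_lhs => rw [pi_eq_sum_univ' v]
      simp [mul_comm]
      
    have h0 := hW (fun i => f (Pi.single i 1)) (fun v hv => by
      rw [← hfe]; exact hle (Submodule.subset_span hv))
    apply hf
    ext v
    have := congrFun h0 v
    simpa using this
  let b := Module.Basis.ofSpan hspan
  have hfin : Fintype _ := FiniteDimensional.fintypeBasisIndex b
  have hcard := (Module.finrank_eq_card_basis b).symm
  simp only [Module.finrank_fintype_fun_eq_card, Fintype.card_fin] at hcard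
  let b' := b.reindex (Fintype.equivFinOfCardEq hcard)
  let S0 := (Pi.basisFun K (Fin d)).toMatrix b'
  refine ⟨⟨S0, b'.toMatrix (Pi.basisFun K (Fin d)), Module.Basis.toMatrix_mul_toMatrix_flip _ _,
    Module.Basis.toMatrix_mul_toMatrix_flip _ _⟩, fun k => ?_⟩
  have : (fun i => S0 i k) = b' k := by
    ext i
    simp [S0, Module.Basis.toMatrix_apply]
  change (fun i => S0 i k) ∈ W
  rw [this]
  apply Module.Basis.ofSpan_subset hspan
  simp [b', b]

variable {F N : Type*} [Field F] [Field N] [Algebra F N]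

lemma exists_lift [Normal F N] {L : Type*} [Field L] [Algebra F L] (t0 t : L →ₐ[F] N) :
    ∃ g : N ≃ₐ[F] N, ∀ x, g (t0 x) = t x := by
  let _ : Algebra L N := t0.toRingHom.toAlgebra
  have : IsScalarTower F L N := IsScalarTower.of_algebraMap_eq (fun x => (t0.commutes x).symm)
  have hA : Algebra.IsAlgebraic F N := inferInstance
  refine ⟨AlgEquiv.ofBijective (AlgHom.liftNormal t N) (Algebra.IsAlgebraic.algHom_bijective _),
    fun x => ?_⟩
  exact AlgHom.liftNormal_commutes t N x

/-- normalised cocycle data -/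
structure PData (F N : Type*) [Field F] [Field N] [Algebra F N] (d : ℕ) where
  P : (N ≃ₐ[F] N) → Matrix.GeneralLinearGroup (Fin d) N
  c : (N ≃ₐ[F] N) → (N ≃ₐ[F] N) → Nˣ
  mul : ∀ g h, (P g).val * (P h).val.map g = (c g h : N) • (P (g * h)).val
  Z : Finset N
  smooth : ∀ u : N ≃ₐ[F] N, (∀ z ∈ Z, u z = z) → P u = 1

lemma exists_pdata {C : Type*} [Ring C] [Algebra F C] [Algebra.IsCentral F C] [IsSimpleRing C]
    [FiniteDimensional F C] {d : ℕ} (hd : 0 < d) (hC : Module.finrank F C = d ^ 2)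
    (ρ : C →ₐ[F] Matrix (Fin d) (Fin d) N) :
    ∃ X : PData F N d, ∀ g x, ρ x * (X.P g).val = (X.P g).val * (ρ x).map g := by
  classical
  have h1 : ∀ g : N ≃ₐ[F] N, ∃ S : Matrix.GeneralLinearGroup (Fin d) N,
      (∀ x, ρ x * S.val = S.val * (ρ x).map g) ∧ ((∀ x, (ρ x).map g = ρ x) → S = 1) := by
    intro g
    by_cases hg : ∀ x, (ρ x).map g = ρ x
    · exact ⟨1, fun x => by simp [hg x], fun _ => rfl⟩
    · obtain ⟨S, hS⟩ := skolem_noether hd hC ρ ((g.toAlgHom.mapMatrix).comp ρ)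
      exact ⟨S, hS, fun h => absurd h hg⟩
  choose P hP hP1 using h1
  have h2 : ∀ g h : N ≃ₐ[F] N, ∃ c : Nˣ,
      (P g).val * (P h).val.map g = (c : N) • (P (g * h)).val := by
    intro g h
    let gh : Matrix.GeneralLinearGroup (Fin d) N := Units.map g.toAlgHom.mapMatrix.toMonoidHom (P h)
    have hgh : gh.val = (P h).val.map g := rfl
    let M : Matrix.GeneralLinearGroup (Fin d) N := P g * gh * (P (g * h))⁻¹
    have hM : M.val * (P (g * h)).val = (P g).val * gh.val := by
      have : M * P (g * h) = P g * gh := by simp [M]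
      exact congrArg Units.val this
    have hcomm : ∀ x, ρ x * M.val = M.val * ρ x := by
      intro x
      have e1 : ρ x * ((P g).val * gh.val) = ((P g).val * gh.val) * (ρ x).map (g * h) := by
        have hmm : (ρ x).map (g * h) = ((ρ x).map h).map g := by ext i j; rfl
        rw [← mul_assoc, hP, mul_assoc, mul_assoc, hgh, hmm]
        congr 1
        have := congrArg (fun M => M.map g) (hP h x)
        simpa [Matrix.map_mul] using this
      rw [← hM] at e1
      have e2 : ρ x * M.val * (P (g * h)).val = M.val * ρ x * (P (g * h)).val := by
        rw [mul_assoc, e1, mul_assoc, mul_assoc, hP]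
      exact (P (g * h)).isUnit.mul_right_cancel e2
    obtain ⟨c, hc⟩ := scalar_of_commute hd hC ρ M.val hcomm
    have hc0 : c ≠ 0 := by
      rintro rfl
      have : M.val * (M⁻¹).val = 1 := Units.mul_inv M
      rw [hc] at this
      have := congrFun (congrFun this ⟨0, hd⟩) ⟨0, hd⟩
      simp at this
    refine ⟨Units.mk0 c hc0, ?_⟩
    rw [← hgh, ← hM, hc]
    simp
  choose c hc using h2
  let b := Module.finBasis F C
  refine ⟨⟨P, c, hc, Finset.univ.image (fun q : Fin (Module.finrank F C) × Fin d × Fin d =>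
    ρ (b q.1) q.2.1 q.2.2), ?_⟩, hP⟩
  intro u hu
  apply hP1
  have hlin : ((u.toAlgHom.mapMatrix).comp ρ).toLinearMap = ρ.toLinearMap := by
    refine b.ext fun k => ?_
    ext i j
    exact hu _ (Finset.mem_image.2 ⟨(k, i, j), Finset.mem_univ _, rfl⟩)
  intro x
  exact congrArg (fun f => f x) hlin

end Descent


section Descent2
variable {F N : Type*} [Field F] [Field N] [Algebra F N]

lemma descent [IsGalois F N] {C : Type*} [Ring C] [Algebra F C] {d : ℕ}
    (ρ : C →ₐ[F] Matrix (Fin d) (Fin d) N)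
    (P : (N ≃ₐ[F] N) → Matrix.GeneralLinearGroup (Fin d) N)
    (hρ : ∀ g x, ρ x * (P g).val = (P g).val * (ρ x).map g)
    (hmul : ∀ g h, (P g).val * (P h).val.map g = (P (g * h)).val)
    (Z : Finset N) (hZ : ∀ u : N ≃ₐ[F] N, (∀ z ∈ Z, u z = z) → P u = 1) :
    Nonempty (C →ₐ[F] Matrix (Fin d) (Fin d) F) := by
  classical
  let N' := IntermediateField.adjoin F (Z : Set N)
  have hfin : FiniteDimensional F N' :=
    IntermediateField.finiteDimensional_adjoin (fun x _ => Algebra.IsIntegral.isIntegral x)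
  have hcoset : ∀ g g' : N ≃ₐ[F] N, (∀ x : N', g x = g' x) → P g = P g' := by
    intro g g' h
    have h1 : P (g⁻¹ * g') = 1 := by
      apply hZ
      intro z hz
      have := h ⟨z, IntermediateField.subset_adjoin F _ hz⟩
      change g.symm (g' z) = z
      rw [AlgEquiv.symm_apply_eq]
      exact this.symm
    have h2 := hmul g (g⁻¹ * g')
    rw [h1] at h2
    apply Units.ext
    simpa [Matrix.map_one] using h2
  choose gl hgl using fun τ : N' →ₐ[F] N => exists_lift N'.val τ
  let b : (Fin d → N') → Fin d → N := fun v => ∑ τ : N' →ₐ[F] N, (P (gl τ)).val.mulVec (fun k => τ (v k))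
  have hb : ∀ g v, (P g).val.mulVec (fun k => g (b v k)) = b v := by
    intro g v
    have e1 : (fun k => g (b v k)) = ∑ τ : N' →ₐ[F] N,
        ((P (gl τ)).val.map g).mulVec (fun k => g (τ (v k))) := by
      ext k
      simp [b, Matrix.mulVec, dotProduct]
    rw [e1, Matrix.mulVec_sum]
    let e : (N' →ₐ[F] N) ≃ (N' →ₐ[F] N) :=
      { toFun := fun τ => g.toAlgHom.comp τ
        invFun := fun τ => g.symm.toAlgHom.comp τ
        left_inv := fun τ => by ext x; simp
        right_inv := fun τ => by ext x; simp }
    refine Fintype.sum_equiv e _ _ fun τ => ?_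
    rw [Matrix.mulVec_mulVec, hmul]
    have : P (g * gl τ) = P (gl (e τ)) := by
      apply hcoset
      intro x
      have h1 := hgl τ x
      have h2 := hgl (e τ) x
      change g (gl τ (N'.val x)) = gl (e τ) (N'.val x)
      rw [h1, h2]
      rfl
    rw [this]
    rfl
  obtain ⟨S, hS⟩ := exists_invertible_cols (Set.range b) (by
    intro w hw
    by_cases hne : Nonempty (N' →ₐ[F] N)
    swap
    · exact absurd ⟨N'.val⟩ hne
    have key : ∀ (k : Fin d) (τ : N' →ₐ[F] N), ∑ i, w i * (P (gl τ)).val i k = 0 := by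
      intro k
      have hli := linearIndependent_algHom_toLinearMap F N' N
      rw [Fintype.linearIndependent_iff] at hli
      apply hli
      ext y
      have := hw _ ⟨Pi.single k y, rfl⟩
      simp only [b, Finset.sum_apply, Matrix.mulVec, dotProduct] at this
      have h3 : ∀ (τ : N' →ₐ[F] N) (i : Fin d), ∑ x, (P (gl τ)).val i x * τ (Pi.single (M := fun _ => N') k y x) =
          (P (gl τ)).val i k * τ y := by
        intro τ i
        rw [Finset.sum_eq_single k]
        · simp
        · intro x _ hx; simp [Pi.single_eq_of_ne hx]
        · simp
      simp only [h3, Finset.mul_sum] at this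
      rw [Finset.sum_comm] at this
      simp only [LinearMap.sum_apply, LinearMap.smul_apply, AlgHom.toLinearMap_apply, smul_eq_mul,
        LinearMap.zero_apply, Finset.sum_mul]
      rw [← this]
      simp only [mul_assoc]
    obtain ⟨τ⟩ := hne
    have hz : Matrix.vecMul w (P (gl τ)).val = 0 := by
      ext k
      exact key k τ
    have := congrArg (fun v => Matrix.vecMul v ((P (gl τ))⁻¹).val) hz
    simp only [Matrix.vecMul_vecMul] at this
    have hinv : (P (gl τ)).val * ((P (gl τ))⁻¹).val = 1 := Units.mul_inv _
    rw [hinv] at this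
    simpa using this)
  have hS' : ∀ g, (P g).val * S.val.map g = S.val := by
    intro g
    ext i k
    obtain ⟨v, hv⟩ := hS k
    have h1 := congrFun (hb g v) i
    have hvk : ∀ i, b v i = S.val i k := fun i => congrFun hv i
    simp only [hvk] at h1
    exact h1
  refine descend_hom (Algebra.ofId F N) (algebraMap F N).injective ρ S ?_
  intro x i k
  have hfix : ∀ g : N ≃ₐ[F] N, (S⁻¹.val * ρ x * S.val).map g = S⁻¹.val * ρ x * S.val := by
    intro g
    have e1 : S.val * (S⁻¹.val * ρ x * S.val) = ρ x * S.val := by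
      rw [← mul_assoc, ← mul_assoc, Units.mul_inv, one_mul]
    have e2 : S.val * (S⁻¹.val * ρ x * S.val).map g = ρ x * S.val := by
      have e3 := congrArg (fun M => M.map g) e1
      simp only [Matrix.map_mul] at e3
      have e4 := congrArg (fun M => (P g).val * M) e3
      simp only [← mul_assoc, hS' g, ← hρ] at e4
      rw [mul_assoc (ρ x), hS' g] at e4
      rw [← e4]
      simp only [Matrix.map_mul, ← mul_assoc]
    exact S.isUnit.mul_left_cancel (e2.trans e1.symm)
  have hmem : (S⁻¹.val * ρ x * S.val) i k ∈ (⊥ : IntermediateField F N) := by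
    rw [InfiniteGalois.mem_bot_iff_fixed]
    intro g
    exact congrFun (congrFun (hfix g) i) k
  rw [IntermediateField.mem_bot] at hmem
  exact hmem

end Descent2


section Twist
open MvPolynomial
variable {F N : Type*} [Field F] [Field N] [Algebra F N] {p : ℕ}
  {B I : Type*} [MulAction (N ≃ₐ[F] N) B] (ind : B → I) (Y : I → PData F N p)

/-- twisted action of the Galois group -/
noncomputable def ghat (g : N ≃ₐ[F] N) : MvPolynomial (B × Fin p) N →+* MvPolynomial (B × Fin p) N :=
  eval₂Hom (C.comp (g : N →+* N))
    (fun v => ∑ l, C (((Y (ind v.1)).P g)⁻¹.val v.2 l) * X (g • v.1, l))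

/-- torus action -/
noncomputable def sact (a : B → Nˣ) :
    MvPolynomial (B × Fin p) N →ₐ[N] MvPolynomial (B × Fin p) N :=
  aeval (fun v => C (a v.1 : N) * X v)

@[simp] lemma ghat_C (g : N ≃ₐ[F] N) (z : N) : ghat ind Y g (C z) = C (g z) := by
  simp [ghat]

lemma ghat_X (g : N ≃ₐ[F] N) (b : B) (k : Fin p) : ghat ind Y g (X (b, k)) =
    ∑ l, C (((Y (ind b)).P g)⁻¹.val k l) * X (g • b, l) := by
  simp [ghat]

@[simp] lemma sact_C (a : B → Nˣ) (z : N) : sact (p := p) a (C z) = C z := by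
  simp [sact]

lemma sact_X (a : B → Nˣ) (v : B × Fin p) : sact a (X v) = C (a v.1 : N) * X v := by
  simp [sact]

lemma PData.inv_mul (D : PData F N p) (g h : N ≃ₐ[F] N) :
    ((D.P h)⁻¹.val.map g) * (D.P g)⁻¹.val = ((D.c g h)⁻¹ : Nˣ).val • (D.P (g * h))⁻¹.val := by
  let gh : Matrix.GeneralLinearGroup (Fin p) N :=
    Units.map g.toAlgHom.mapMatrix.toMonoidHom (D.P h)
  have hgh : gh.val = (D.P h).val.map g := rfl
  have hgh' : gh⁻¹.val = (D.P h)⁻¹.val.map g := rfl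
  have h1 := D.mul g h
  rw [← hgh] at h1
  rw [← hgh']
  have h2 : ((D.P g) * gh).val * (gh⁻¹.val * (D.P g)⁻¹.val) = 1 := by
    have : (D.P g) * gh * (gh⁻¹ * (D.P g)⁻¹) = 1 := by group
    exact congrArg Units.val this
  have h3 : ((D.P g) * gh).val * (((D.c g h)⁻¹ : Nˣ).val • (D.P (g * h))⁻¹.val) = 1 := by
    have : ((D.P g) * gh).val = (D.c g h : N) • (D.P (g * h)).val := h1
    rw [this, Matrix.smul_mul, Matrix.mul_smul, smul_smul, Units.mul_inv, Units.mul_inv, one_smul]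
  exact ((D.P g) * gh).isUnit.mul_left_cancel (h2.trans h3.symm)

lemma PData.P_one (D : PData F N p) : D.P 1 = 1 := D.smooth 1 (fun _ _ => rfl)

lemma ghat_vec (g : N ≃ₐ[F] N) (b : B) (k : Fin p) :
    ∑ l, C ((Y (ind b)).P g |>.val k l) * ghat ind Y g (X (b, l)) = X (g • b, k) := by
  simp only [ghat_X, Finset.mul_sum, ← mul_assoc, ← C_mul]
  rw [Finset.sum_comm]
  simp only [← Finset.sum_mul, ← map_sum]
  have h : ∀ l, ∑ i, ((Y (ind b)).P g).val k i * ((Y (ind b)).P g)⁻¹.val i l =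
      (1 : Matrix (Fin p) (Fin p) N) k l := by
    intro l
    rw [← Units.mul_inv ((Y (ind b)).P g), Matrix.mul_apply]
  simp only [h, Matrix.one_apply]
  simp

variable {ind}

lemma ghat_ghat (hind : ∀ (g : N ≃ₐ[F] N) b, ind (g • b) = ind b) (g h : N ≃ₐ[F] N) (f : MvPolynomial (B × Fin p) N) :
    ghat ind Y g (ghat ind Y h f) =
      sact (fun b => ((Y (ind b)).c g h)⁻¹) (ghat ind Y (g * h) f) := by
  have : (ghat ind Y g).comp (ghat ind Y h) =
      (sact (fun b => ((Y (ind b)).c g h)⁻¹)).toRingHom.comp (ghat ind Y (g * h)) := by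
    apply MvPolynomial.ringHom_ext
    · intro z; simp
    · rintro ⟨b, k⟩
      have hm := (Y (ind b)).inv_mul g h
      simp only [RingHom.comp_apply, ghat_X, map_sum, map_mul, ghat_C, hind, Finset.mul_sum]
      rw [Finset.sum_comm]
      simp only [← mul_assoc, ← C_mul, ← Finset.sum_mul, ← map_sum]
      refine Finset.sum_congr rfl fun l _ => ?_
      have := congrFun (congrFun hm k) l
      rw [Matrix.mul_apply] at this
      simp only [Matrix.map_apply] at this
      rw [this]
      simp only [AlgHom.toRingHom_eq_coe, RingHom.coe_coe, sact_X, sact_C, hind, ← mul_assoc,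
        ← C_mul, mul_smul, Matrix.smul_apply, smul_eq_mul]
      rw [mul_comm (((Y (ind b)).c g h)⁻¹ : Nˣ).val]
  exact congrArg (fun φ => φ f) this

lemma ghat_one (f : MvPolynomial (B × Fin p) N) : ghat ind Y 1 f = f := by
  have : ghat ind Y 1 = RingHom.id _ := by
    apply MvPolynomial.ringHom_ext
    · intro z; simp
    · rintro ⟨b, k⟩
      simp [ghat_X, PData.P_one, Matrix.one_apply]
  rw [this]; rfl

lemma sact_sact (a b : B → Nˣ) (f : MvPolynomial (B × Fin p) N) :
    sact a (sact b f) = sact (a * b) f := by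
  have : (sact a).comp (sact b) = sact (p := p) (a * b) := by
    apply MvPolynomial.algHom_ext
    intro v
    simp only [AlgHom.comp_apply, sact_X, map_mul, sact_C, Pi.mul_apply, Units.val_mul]
    ring
  rw [← this]; rfl

lemma sact_one (f : MvPolynomial (B × Fin p) N) : sact 1 f = f := by
  have : sact (1 : B → Nˣ) = AlgHom.id N (MvPolynomial (B × Fin p) N) := by
    apply MvPolynomial.algHom_ext
    intro v
    simp [sact_X]
  rw [this]; rfl

lemma sact_ghat (g : N ≃ₐ[F] N) (a : B → Nˣ) (f : MvPolynomial (B × Fin p) N) :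
    sact a (ghat ind Y g f) =
      ghat ind Y g (sact (fun b => Units.map (g.symm : N →* N) (a (g • b))) f) := by
  have : (sact a).toRingHom.comp (ghat ind Y g) = (ghat ind Y g).comp
      (sact (fun b => Units.map (g.symm : N →* N) (a (g • b)))).toRingHom := by
    apply MvPolynomial.ringHom_ext
    · intro z; simp
    · rintro ⟨b, k⟩
      simp only [RingHom.comp_apply, AlgHom.toRingHom_eq_coe, RingHom.coe_coe, sact_X, map_mul,
        ghat_C, ghat_X, map_sum, sact_C, Finset.mul_sum]
      refine Finset.sum_congr rfl fun l _ => ?_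
      simp
      ring
  exact congrArg (fun φ => φ f) this

lemma coeff_sact (a : B → Nˣ) (f : MvPolynomial (B × Fin p) N) (m : (B × Fin p) →₀ ℕ) :
    coeff m (sact a f) = (m.prod fun v n => (a v.1 : N) ^ n) * coeff m f := by
  classical
  induction f using MvPolynomial.induction_on' with
  | monomial m' r =>
    have : sact a (monomial m' r) = monomial m' ((m'.prod fun v n => (a v.1 : N) ^ n) * r) := by
      rw [sact, aeval_monomial, monomial_eq (s := m')]
      simp only [mul_pow, ← C_pow, Finset.prod_mul_distrib, algebraMap_eq, C_mul, Finsupp.prod, map_prod]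
      ring
    rw [this, coeff_monomial, coeff_monomial]
    split_ifs with h
    · rw [h]
    · simp
  | add f g hf hg => simp [hf, hg, mul_add]

lemma ghat_fix (u : N ≃ₐ[F] N) (f : MvPolynomial (B × Fin p) N)
    (h1 : ∀ m, u (coeff m f) = coeff m f) (h2 : ∀ v ∈ f.vars, u • v.1 = v.1)
    (h3 : ∀ v ∈ f.vars, (Y (ind v.1)).P u = 1) : ghat ind Y u f = f := by
  have hX : ∀ v ∈ f.vars, ghat ind Y u (X v) = X v := by
    rintro ⟨b, k⟩ hv
    have e2 : u • b = b := h2 _ hv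
    have e3 : (Y (ind b)).P u = 1 := h3 _ hv
    simp [ghat_X, e2, e3, Matrix.one_apply]
  conv_lhs => rw [f.as_sum]
  conv_rhs => rw [f.as_sum]
  rw [map_sum]
  refine Finset.sum_congr rfl fun m hm => ?_
  rw [monomial_eq, map_mul, ghat_C, h1, Finsupp.prod, map_prod]
  congr 1
  refine Finset.prod_congr rfl fun v hv => ?_
  rw [map_pow, hX v ((mem_vars_iff_mem_support v).2 ⟨m, hm, hv⟩)]

lemma sact_injective (a : B → Nˣ) : Function.Injective (sact (p := p) a) := by
  intro x y h
  have := congrArg (sact a⁻¹) h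
  rwa [sact_sact, sact_sact, inv_mul_cancel, sact_one, sact_one] at this

lemma ghat_injective (hind : ∀ (g : N ≃ₐ[F] N) b, ind (g • b) = ind b) (g : N ≃ₐ[F] N) :
    Function.Injective (ghat ind Y g) := by
  intro x y h
  have := congrArg (ghat ind Y g⁻¹) h
  rw [ghat_ghat Y hind, ghat_ghat Y hind, inv_mul_cancel, ghat_one, ghat_one] at this
  exact sact_injective _ this

end Twist


section TwistK
open MvPolynomial
variable {F N : Type*} [Field F] [Field N] [Algebra F N] {p : ℕ}
  {B I : Type*} [MulAction (N ≃ₐ[F] N) B] {ind : B → I} (Y : I → PData F N p)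
  (K : Type*) [Field K] [Algebra (MvPolynomial (B × Fin p) N) K]
  [IsFractionRing (MvPolynomial (B × Fin p) N) K] [Algebra F K]
  [IsScalarTower F (MvPolynomial (B × Fin p) N) K]

/-- extension of the Galois action to the fraction field -/
noncomputable def gK (hind : ∀ (g : N ≃ₐ[F] N) b, ind (g • b) = ind b) (g : N ≃ₐ[F] N) :
    K →ₐ[F] K where
  toRingHom := IsFractionRing.map (ghat_injective Y hind g)
  commutes' z := by
    have h1 : algebraMap F K z = algebraMap (MvPolynomial (B × Fin p) N) K (C (algebraMap F N z)) := by
      rw [IsScalarTower.algebraMap_apply F (MvPolynomial (B × Fin p) N) K]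
      rfl
    rw [h1]
    change IsFractionRing.map (ghat_injective Y hind g) _ = _
    rw [IsFractionRing.map, IsLocalization.map_eq]
    simp

lemma gK_algebraMap (hind : ∀ (g : N ≃ₐ[F] N) b, ind (g • b) = ind b) (g : N ≃ₐ[F] N)
    (f : MvPolynomial (B × Fin p) N) :
    gK Y K hind g (algebraMap _ K f) = algebraMap _ K (ghat ind Y g f) := by
  change IsFractionRing.map (ghat_injective Y hind g) _ = _
  rw [IsFractionRing.map, IsLocalization.map_eq]

variable (F) in
/-- extension of the torus action to the fraction field -/
noncomputable def sK (a : B → Nˣ) : K →ₐ[F] K where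
  toRingHom := IsFractionRing.map (A := MvPolynomial (B × Fin p) N)
    (j := (sact (p := p) a).toRingHom) (sact_injective a)
  commutes' z := by
    have h1 : algebraMap F K z = algebraMap (MvPolynomial (B × Fin p) N) K (C (algebraMap F N z)) := by
      rw [IsScalarTower.algebraMap_apply F (MvPolynomial (B × Fin p) N) K]
      rfl
    rw [h1]
    change IsFractionRing.map (A := MvPolynomial (B × Fin p) N)
      (j := (sact (p := p) a).toRingHom) (sact_injective a) _ = _
    rw [IsFractionRing.map, IsLocalization.map_eq]
    simp

lemma sK_algebraMap (a : B → Nˣ) (f : MvPolynomial (B × Fin p) N) :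
    sK (p := p) F K a (algebraMap _ K f) = algebraMap _ K (sact a f) := by
  change IsFractionRing.map (A := MvPolynomial (B × Fin p) N)
      (j := (sact (p := p) a).toRingHom) (sact_injective a) _ = _
  rw [IsFractionRing.map, IsLocalization.map_eq]
  rfl

lemma gK_gK (hind : ∀ (g : N ≃ₐ[F] N) b, ind (g • b) = ind b) (g h : N ≃ₐ[F] N) (f : K) :
    gK Y K hind g (gK Y K hind h f) =
      sK (p := p) F K (fun b => ((Y (ind b)).c g h)⁻¹) (gK Y K hind (g * h) f) := by
  have : (gK Y K hind g).toRingHom.comp (gK Y K hind h).toRingHom =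
      (sK (p := p) F K (fun b => ((Y (ind b)).c g h)⁻¹)).toRingHom.comp
        (gK Y K hind (g * h)).toRingHom := by
    apply IsLocalization.ringHom_ext (nonZeroDivisors (MvPolynomial (B × Fin p) N))
    refine RingHom.ext fun f => ?_
    change gK Y K hind g (gK Y K hind h (algebraMap _ K f)) =
      sK (p := p) F K (fun b => ((Y (ind b)).c g h)⁻¹) (gK Y K hind (g * h) (algebraMap _ K f))
    rw [gK_algebraMap, gK_algebraMap, gK_algebraMap, sK_algebraMap, ghat_ghat Y hind]
  exact congrArg (fun φ => φ f) this

lemma sK_gK (hind : ∀ (g : N ≃ₐ[F] N) b, ind (g • b) = ind b) (g : N ≃ₐ[F] N) (a : B → Nˣ)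
    (f : K) : sK (p := p) F K a (gK Y K hind g f) =
      gK Y K hind g (sK (p := p) F K (fun b => Units.map (g.symm : N →* N) (a (g • b))) f) := by
  have : (sK (p := p) F K a).toRingHom.comp (gK Y K hind g).toRingHom =
      (gK Y K hind g).toRingHom.comp
        (sK (p := p) F K (fun b => Units.map (g.symm : N →* N) (a (g • b)))).toRingHom := by
    apply IsLocalization.ringHom_ext (nonZeroDivisors (MvPolynomial (B × Fin p) N))
    refine RingHom.ext fun f => ?_
    change sK (p := p) F K a (gK Y K hind g (algebraMap _ K f)) = gK Y K hind g
      (sK (p := p) F K (fun b => Units.map (g.symm : N →* N) (a (g • b))) (algebraMap _ K f))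
    rw [gK_algebraMap, sK_algebraMap, sK_algebraMap, gK_algebraMap, sact_ghat]
  exact congrArg (fun φ => φ f) this

lemma gK_one (hind : ∀ (g : N ≃ₐ[F] N) b, ind (g • b) = ind b) (f : K) :
    gK Y K hind 1 f = f := by
  have : (gK Y K hind 1).toRingHom = RingHom.id K := by
    apply IsLocalization.ringHom_ext (nonZeroDivisors (MvPolynomial (B × Fin p) N))
    refine RingHom.ext fun f => ?_
    change gK Y K hind 1 (algebraMap _ K f) = algebraMap _ K f
    rw [gK_algebraMap, ghat_one]
  exact congrArg (fun φ => φ f) this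

/-- the field of elements fixed by a set of endomorphisms -/
def fixF {F K : Type*} [Field F] [Field K] [Algebra F K] (S : Set (K →ₐ[F] K)) :
    IntermediateField F K where
  carrier := {f | ∀ φ ∈ S, φ f = f}
  mul_mem' := fun hx hy φ hφ => by rw [map_mul, hx φ hφ, hy φ hφ]
  one_mem' := fun φ _ => map_one φ
  add_mem' := fun hx hy φ hφ => by rw [map_add, hx φ hφ, hy φ hφ]
  zero_mem' := fun φ _ => map_zero φ
  algebraMap_mem' := fun z φ _ => φ.commutes z
  inv_mem' := fun x hx φ hφ => by rw [map_inv₀, hx φ hφ]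

lemma mem_fixF {F K : Type*} [Field F] [Field K] [Algebra F K] (S : Set (K →ₐ[F] K)) (f : K) :
    f ∈ fixF S ↔ ∀ φ ∈ S, φ f = f := Iff.rfl

end TwistK


section Primitive

lemma exists_primitive {Q K σ : Type*} [CommRing Q] [IsDomain Q] [UniqueFactorizationMonoid Q]
    [Field K] [Algebra Q K] [IsFractionRing Q K] [Fintype σ] (s : σ → K) (hs : ∃ i, s i ≠ 0) :
    ∃ (κ : K) (S : σ → Q), κ ≠ 0 ∧ (∀ i, algebraMap Q K (S i) = κ * s i) ∧
      ∀ w, (∀ i, w ∣ S i) → IsUnit w := by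
  classical
  let _ : StrongNormalizationMonoid Q := UniqueFactorizationMonoid.strongNormalizationMonoid
  let _ : NormalizedGCDMonoid Q := UniqueFactorizationMonoid.toNormalizedGCDMonoid Q
  obtain ⟨b, hb⟩ := IsLocalization.exist_integer_multiples (nonZeroDivisors Q) Finset.univ s
  choose f hf using fun i => hb i (Finset.mem_univ i)
  obtain ⟨i0, hi0⟩ := hs
  have hb0 : algebraMap Q K b ≠ 0 :=
    IsFractionRing.to_map_ne_zero_of_mem_nonZeroDivisors b.2
  have hf' : ∀ i, algebraMap Q K (f i) = algebraMap Q K b * s i := by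
    intro i
    rw [hf i, Algebra.smul_def]
  obtain ⟨g, hg, hg1⟩ := Finset.extract_gcd f (s := Finset.univ) ⟨i0, Finset.mem_univ _⟩
  have hgcd : algebraMap Q K (Finset.univ.gcd f) ≠ 0 := by
    intro h0
    have h1 : Finset.univ.gcd f = 0 := by
      apply IsFractionRing.injective Q K
      rw [h0, map_zero]
    have := hg i0 (Finset.mem_univ _)
    rw [h1, zero_mul] at this
    have h2 := hf' i0
    rw [this, map_zero] at h2
    exact mul_ne_zero hb0 hi0 h2.symm
  refine ⟨(algebraMap Q K (Finset.univ.gcd f))⁻¹ * algebraMap Q K b, g, ?_, ?_, ?_⟩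
  · exact mul_ne_zero (inv_ne_zero hgcd) hb0
  · intro i
    rw [mul_assoc, ← hf', hg i (Finset.mem_univ _), map_mul, inv_mul_cancel_left₀ hgcd]
  · intro w hw
    have : w ∣ Finset.univ.gcd g := Finset.dvd_gcd fun i _ => hw i
    rw [hg1] at this
    exact isUnit_of_dvd_one this

lemma primitive_int {Q K σ : Type*} [CommRing Q] [IsDomain Q] [UniqueFactorizationMonoid Q]
    [Field K] [Algebra Q K] [IsFractionRing Q K] (S T : σ → Q)
    (hS : ∀ w, (∀ i, w ∣ S i) → IsUnit w) (f : K)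
    (h : ∀ i, algebraMap Q K (T i) = f * algebraMap Q K (S i)) :
    ∃ l : Q, algebraMap Q K l = f ∧ ∀ i, T i = l * S i := by
  obtain ⟨n, m, hnm, rfl⟩ := IsFractionRing.exists_reduced_fraction (A := Q) f
  have h2 : ∀ i, (m : Q) * T i = n * S i := by
    intro i
    apply IsFractionRing.injective Q K
    rw [map_mul, map_mul, h i, ← mul_assoc, mul_comm (algebraMap Q K m)]
    rw [IsLocalization.mk'_spec]
  have hu : IsUnit (m : Q) := hS _ fun i =>
    hnm.symm.dvd_of_dvd_mul_left (Dvd.intro _ (h2 i))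
  obtain ⟨u, hu⟩ := hu
  refine ⟨n * (u⁻¹ : Qˣ), ?_, ?_⟩
  · rw [IsLocalization.eq_mk'_iff_mul_eq, ← map_mul, ← hu]
    simp
  · intro i
    rw [mul_right_comm, ← h2 i, ← hu, mul_comm, ← mul_assoc]
    simp

end Primitive

section KernelA
open MvPolynomial
variable {F N : Type*} [Field F] [Field N] [Algebra F N] {p : ℕ}
  {B I : Type*} [MulAction (N ≃ₐ[F] N) B] {ind : B → I} (Y : I → PData F N p)
  (K : Type*) [Field K] [Algebra (MvPolynomial (B × Fin p) N) K]
  [IsFractionRing (MvPolynomial (B × Fin p) N) K] [Algebra F K]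
  [IsScalarTower F (MvPolynomial (B × Fin p) N) K]

lemma kernel_primitive (hind : ∀ (g : N ≃ₐ[F] N) b, ind (g • b) = ind b)
    {C' : Type*} [Ring C'] [Algebra F C'] [Algebra.IsCentral F C'] [IsSimpleRing C']
    [FiniteDimensional F C'] {d : ℕ} (hd : 0 < d) (hC : Module.finrank F C' = d ^ 2)
    (ρ : C' →ₐ[F] Matrix (Fin d) (Fin d) N) (W : PData F N d)
    (hW : ∀ g x, ρ x * (W.P g).val = (W.P g).val * (ρ x).map g)
    (r : C' →ₐ[F] Matrix (Fin d) (Fin d) K)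
    (hr1 : ∀ x g, (r x).map (gK Y K hind g) = r x)
    (hr2 : ∀ x (a : B → Nˣ), (r x).map (sK (p := p) F K a) = r x) :
    ∃ S : Matrix (Fin d) (Fin d) (MvPolynomial (B × Fin p) N),
      (∀ w, (∀ i j, w ∣ S i j) → IsUnit w) ∧
      (∀ g, ∃ l : MvPolynomial (B × Fin p) N, ((W.P g).val.map C) * S.map (ghat ind Y g) = l • S) ∧
      (∀ a : B → Nˣ, ∃ l : MvPolynomial (B × Fin p) N, S.map (sact a) = l • S) := by
  let ν : N →ₐ[F] K := (IsScalarTower.toAlgHom F (MvPolynomial (B × Fin p) N) K).comp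
    (IsScalarTower.toAlgHom F N (MvPolynomial (B × Fin p) N))
  have hν : ∀ z, ν z = algebraMap (MvPolynomial (B × Fin p) N) K (C z) := fun z => rfl
  let ρK : C' →ₐ[F] Matrix (Fin d) (Fin d) K := ν.mapMatrix.comp ρ
  have hρK : ∀ x, ρK x = (ρ x).map ν := fun x => rfl
  obtain ⟨S0, hS0⟩ := skolem_noether hd hC ρK r
  have hS0ne : ∃ q : Fin d × Fin d, S0.val q.1 q.2 ≠ 0 := by
    by_contra hcon
    push Not at hcon
    have h0 : S0.val = 0 := by ext i j; exact hcon (i, j)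
    have h1 : S0.val * S0⁻¹.val = 1 := Units.mul_inv S0
    rw [h0, zero_mul] at h1
    have := congrFun (congrFun h1 ⟨0, hd⟩) ⟨0, hd⟩
    simp at this
  obtain ⟨κ, S', hκ, hS', hprim⟩ := exists_primitive (Q := MvPolynomial (B × Fin p) N)
    (fun q : Fin d × Fin d => S0.val q.1 q.2) hS0ne
  let S : Matrix (Fin d) (Fin d) (MvPolynomial (B × Fin p) N) := Matrix.of fun i j => S' (i, j)
  let SK : Matrix (Fin d) (Fin d) K := S.map (algebraMap (MvPolynomial (B × Fin p) N) K)
  have hSK : SK = κ • S0.val := by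
    ext i j
    exact hS' (i, j)
  have hSKr : ∀ x, ρK x * SK = SK * r x := by
    intro x
    rw [hSK, Matrix.mul_smul, Matrix.smul_mul, hS0]
  -- scalars
  have hscal : ∀ T : Matrix (Fin d) (Fin d) K, (∀ x, ρK x * T = T * r x) →
      ∃ f : K, T = f • SK := by
    intro T hT
    obtain ⟨f, hf⟩ := scalar_of_commute hd hC ρK (T * S0⁻¹.val) (by
      intro x
      have h1 : S0⁻¹.val * ρK x = r x * S0⁻¹.val := by
        have h2 : S0.val * (S0⁻¹.val * ρK x) = S0.val * (r x * S0⁻¹.val) := by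
          rw [← mul_assoc, ← mul_assoc, Units.mul_inv, one_mul, ← hS0, mul_assoc,
            Units.mul_inv, mul_one]
        exact S0.isUnit.mul_left_cancel h2
      rw [← mul_assoc, hT, mul_assoc, mul_assoc, h1])
    refine ⟨f * κ⁻¹, ?_⟩
    have h3 : T = T * S0⁻¹.val * S0.val := by
      rw [mul_assoc, Units.inv_mul, mul_one]
    rw [h3, hf, hSK, smul_smul, mul_assoc, inv_mul_cancel₀ hκ]
    simp
  have hintegral : ∀ T : Matrix (Fin d) (Fin d) (MvPolynomial (B × Fin p) N),
      (∀ x, ρK x * T.map (algebraMap (MvPolynomial (B × Fin p) N) K) =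
        T.map (algebraMap (MvPolynomial (B × Fin p) N) K) * r x) →
      ∃ l : MvPolynomial (B × Fin p) N, T = l • S := by
    intro T hT
    obtain ⟨f, hf⟩ := hscal _ hT
    obtain ⟨l, -, hl⟩ := primitive_int (K := K) S' (fun q => T q.1 q.2) hprim f (by
      rintro ⟨i, j⟩
      exact congrFun (congrFun hf i) j)
    exact ⟨l, by ext1 i j; exact hl (i, j)⟩
  refine ⟨S, fun w hw => hprim w fun q => hw q.1 q.2, fun g => hintegral _ fun x => ?_,
    fun a => hintegral _ fun x => ?_⟩
  · have e1 := congrArg (fun M => M.map (gK Y K hind g)) (hSKr x)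
    simp only [Matrix.map_mul, hr1] at e1
    have e2 : (ρK x).map (gK Y K hind g) = ((ρ x).map g).map ν := by
      ext i j
      simp only [hρK, Matrix.map_apply, hν, gK_algebraMap, ghat_C]
    have e3 : SK.map (gK Y K hind g) =
        (S.map (ghat ind Y g)).map (algebraMap (MvPolynomial (B × Fin p) N) K) := by
      ext i j
      simp only [SK, Matrix.map_apply, gK_algebraMap]
    rw [e2, e3] at e1
    have e4 : ((W.P g).val.map (C (σ := B × Fin p))).map (algebraMap (MvPolynomial (B × Fin p) N) K)
        = (W.P g).val.map ν := by
      ext i j; rfl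
    rw [Matrix.map_mul, e4, mul_assoc, ← e1, ← mul_assoc, ← mul_assoc, ← Matrix.map_mul, ← hW,
      Matrix.map_mul, hρK]
  · have e1 := congrArg (fun M => M.map (sK (p := p) F K a)) (hSKr x)
    simp only [Matrix.map_mul, hr2] at e1
    have e2 : (ρK x).map (sK (p := p) F K a) = ρK x := by
      ext i j
      simp only [hρK, Matrix.map_apply, hν, sK_algebraMap, sact_C]
    have e3 : SK.map (sK (p := p) F K a) =
        (S.map (sact a)).map (algebraMap (MvPolynomial (B × Fin p) N) K) := by
      ext i j
      simp only [SK, Matrix.map_apply, sK_algebraMap]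
    rw [e2, e3] at e1
    exact e1

end KernelA


section KernelB
open MvPolynomial
variable {F N : Type*} [Field F] [Field N] [Algebra F N] {p : ℕ}
  {B I : Type*} [MulAction (N ≃ₐ[F] N) B] {ind : B → I} (Y : I → PData F N p)

/-- the character of weight `n` -/
def wchar {B N : Type*} [Field N] (n : B →₀ ℕ) (a : B → Nˣ) : Nˣ := n.prod fun b k => a b ^ k

lemma wchar_inv {B N : Type*} [Field N] (n : B →₀ ℕ) (a : B → Nˣ) :
    wchar n (fun b => (a b)⁻¹) = (wchar n a)⁻¹ := by
  simp [wchar, Finsupp.prod]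

lemma wchar_update {B N : Type*} [Field N] [DecidableEq B] (n : B →₀ ℕ) (b : B) (z : Nˣ) :
    wchar n (Function.update (1 : B → Nˣ) b z) = z ^ n b := by
  rw [wchar, Finsupp.prod, Finset.prod_eq_single b]
  · simp
  · intro b' _ hb'
    rw [Function.update_of_ne hb']
    simp
  · intro hb
    rw [Finsupp.notMem_support_iff.1 hb]
    simp

lemma pow_inj_of_infinite {N : Type*} [Field N] [Infinite N] (a b : ℕ)
    (h : ∀ z : Nˣ, z ^ a = z ^ b) : a = b := by
  have h2 : (Polynomial.X ^ (a + 1) : Polynomial N) = Polynomial.X ^ (b + 1) := by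
    apply Polynomial.funext
    intro z
    by_cases hz : z = 0
    · simp [hz]
    · have := congrArg Units.val (h (Units.mk0 z hz))
      simp at this
      simp [pow_succ, this]
  have := congrArg Polynomial.natDegree h2
  simpa using this

set_option maxHeartbeats 1600000 in
lemma kernel_consts [Infinite N] (hind : ∀ (g : N ≃ₐ[F] N) b, ind (g • b) = ind b)
    {d : ℕ} (W : PData F N d)
    (S : Matrix (Fin d) (Fin d) (MvPolynomial (B × Fin p) N))
    (hprim : ∀ w, (∀ i j, w ∣ S i j) → IsUnit w)
    (h1 : ∀ g, ∃ l : MvPolynomial (B × Fin p) N,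
      ((W.P g).val.map C) * S.map (ghat ind Y g) = l • S)
    (h2 : ∀ a : B → Nˣ, ∃ l : MvPolynomial (B × Fin p) N, S.map (sact a) = l • S) :
    ∃ (l : (N ≃ₐ[F] N) → Nˣ) (n : B →₀ ℕ),
      (∀ g, ((W.P g).val.map C) * S.map (ghat ind Y g) =
        (C (l g : N) : MvPolynomial (B × Fin p) N) • S) ∧
      (∀ (g : N ≃ₐ[F] N) b, n (g • b) = n b) ∧
      (∀ g h, (l g : N) * g (l h) =
        W.c g h * ((wchar n fun b => (Y (ind b)).c g h)⁻¹ : Nˣ) * l (g * h)) := by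
  classical
  obtain ⟨i0, j0, hne⟩ : ∃ i j, S i j ≠ 0 := by
    by_contra hcon
    push Not at hcon
    exact not_isUnit_zero (hprim 0 fun i j => by rw [hcon i j])
  have hcancel : ∀ l l' : MvPolynomial (B × Fin p) N, l • S = l' • S → l = l' := by
    intro l l' h
    have := congrFun (congrFun h i0) j0
    exact mul_right_cancel₀ hne this
  have hconst : ∀ l : MvPolynomial (B × Fin p) N, IsUnit l → ∃ r : Nˣ, l = C (r : N) := by
    intro l hl
    obtain ⟨r, hr, h⟩ := MvPolynomial.isUnit_iff_eq_C_of_isReduced.1 hl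
    exact ⟨hr.unit, h⟩
  have hmap : ∀ (φ : MvPolynomial (B × Fin p) N →+* MvPolynomial (B × Fin p) N)
      (l : MvPolynomial (B × Fin p) N) (M : Matrix (Fin d) (Fin d) (MvPolynomial (B × Fin p) N)),
      (l • M).map φ = φ l • M.map φ := by
    intro φ l M
    ext1 i j
    simp
  -- the torus
  choose μ hμ using h2
  have hμunit : ∀ a, IsUnit (μ a) := by
    intro a
    have e1 := congrArg (fun M => M.map (sact a).toRingHom) (hμ a⁻¹)
    have e2 : (S.map (sact a⁻¹)).map (sact a).toRingHom = S := by
      ext1 i j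
      change sact a (sact a⁻¹ (S i j)) = S i j
      rw [sact_sact, mul_inv_cancel, sact_one]
    have e3 : S.map (sact a).toRingHom = μ a • S := hμ a
    simp only [hmap, e2, e3, smul_smul] at e1
    have := hcancel 1 _ ((one_smul _ S).trans e1)
    exact IsUnit.of_mul_eq_one _ ((mul_comm _ _).trans this.symm)
  obtain ⟨m, hm⟩ : ∃ m, coeff m (S i0 j0) ≠ 0 := by
    by_contra hcon
    push Not at hcon
    exact hne (MvPolynomial.ext _ _ fun m => by rw [hcon m, coeff_zero])
  let n : B →₀ ℕ := m.mapDomain Prod.fst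
  have hχ : ∀ a : B → Nˣ, μ a = C (wchar n a : N) := by
    intro a
    obtain ⟨r, hr⟩ := hconst _ (hμunit a)
    rw [hr]
    congr 1
    have e1 := congrArg (coeff m) (congrFun (congrFun (hμ a) i0) j0)
    rw [hr] at e1
    simp only [Matrix.map_apply, coeff_sact, Matrix.smul_apply, smul_eq_mul, coeff_C_mul] at e1
    have e2 := mul_right_cancel₀ hm e1
    rw [← e2, wchar, Finsupp.prod_mapDomain_index (by simp) (by intro b k k'; rw [pow_add])]
    simp [Finsupp.prod]
  have hsact : ∀ a : B → Nˣ, S.map (sact a).toRingHom =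
      (C (wchar n a : N) : MvPolynomial (B × Fin p) N) • S := by
    intro a
    rw [← hχ]
    exact hμ a
  -- the group
  choose l hl using h1
  have hcoc : ∀ g h, ghat ind Y g (l h) * l g = C (W.c g h : N) *
      (sact (fun b => ((Y (ind b)).c g h)⁻¹) (l (g * h)) *
        C (wchar n (fun b => ((Y (ind b)).c g h)⁻¹) : N)) := by
    intro g h
    apply hcancel
    have e1 := congrArg (fun M => ((W.P g).val.map C) * M.map (ghat ind Y g)) (hl h)
    simp only [hmap, Matrix.map_mul, Matrix.mul_smul, hl g, smul_smul] at e1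
    rw [← e1, ← mul_assoc]
    have e2 : ((W.P h).val.map (C (σ := B × Fin p))).map (ghat ind Y g) =
        ((W.P h).val.map g).map C := by
      ext1 i j
      simp
    have e3 : (S.map (ghat ind Y h)).map (ghat ind Y g) =
        (S.map (ghat ind Y (g * h))).map (sact (fun b => ((Y (ind b)).c g h)⁻¹)).toRingHom := by
      ext1 i j
      exact ghat_ghat Y hind g h _
    have e4 : ((W.P g).val.map (C (σ := B × Fin p))) * ((W.P h).val.map g).map C =
        (C (W.c g h : N) : MvPolynomial (B × Fin p) N) • ((W.P (g * h)).val.map C) := by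
      rw [← Matrix.map_mul, W.mul]
      ext1 i j
      simp
    rw [e2, e3, e4, Matrix.smul_mul]
    have e5 : ((W.P (g * h)).val.map (C (σ := B × Fin p))) =
        ((W.P (g * h)).val.map (C (σ := B × Fin p))).map
          (sact (fun b => ((Y (ind b)).c g h)⁻¹)).toRingHom := by
      ext1 i j
      simp
    rw [e5, ← Matrix.map_mul, hl, hmap, hsact, smul_smul, smul_smul]
    simp only [AlgHom.toRingHom_eq_coe, RingHom.coe_coe, mul_assoc]
  have hl1 : l 1 = 1 := by
    apply hcancel
    rw [← hl 1, W.P_one, one_smul]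
    have : S.map (ghat ind Y 1) = S := by
      ext1 i j
      exact ghat_one Y _
    have e1 : (1 : Matrix.GeneralLinearGroup (Fin d) N).val.map (C (σ := B × Fin p)) = 1 :=
      Matrix.map_one _ (map_zero _) (map_one _)
    rw [this, e1, one_mul]
  have hlunit : ∀ g, IsUnit (l g) := by
    intro g
    have := hcoc g g⁻¹
    rw [mul_inv_cancel, hl1, map_one, one_mul, ← C_mul] at this
    refine isUnit_of_mul_isUnit_right (x := ghat ind Y g (l g⁻¹)) ?_
    rw [this]
    exact (IsUnit.mul (Units.isUnit _) (Units.isUnit _)).map C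
  choose l' hl' using fun g => hconst _ (hlunit g)
  refine ⟨l', n, fun g => by rw [← hl', hl], ?_, ?_⟩
  · intro g b
    -- invariance
    have hinv : ∀ a : B → Nˣ, (wchar n a : N) =
        g (wchar n (fun b => Units.map (g.symm : N →* N) (a (g • b))) : Nˣ) := by
      intro a
      have e3 : (S.map (ghat ind Y g)).map (sact a).toRingHom =
          (S.map (sact (fun b => Units.map (g.symm : N →* N) (a (g • b)))).toRingHom).map
            (ghat ind Y g) := by
        ext1 i j
        exact sact_ghat Y g a _
      have e1 := congrArg (fun M => M.map (sact a).toRingHom) (hl g)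
      have e5 : ((W.P g).val.map (C (σ := B × Fin p))).map (sact a).toRingHom =
          ((W.P g).val.map (C (σ := B × Fin p))) := by
        ext1 i j
        simp
      simp only [Matrix.map_mul, hmap] at e1
      rw [e5, e3, hsact, hmap, Matrix.mul_smul, hl g, hsact, ghat_C, smul_smul, smul_smul,
        hl'] at e1
      have e6 := hcancel _ _ e1
      have e7 : (sact a).toRingHom (C (l' g : N) : MvPolynomial (B × Fin p) N) = C (l' g : N) :=
        sact_C a _
      rw [e7, mul_comm, ← C_mul, ← C_mul] at e6
      have e8 := C_injective (B × Fin p) N e6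
      exact (mul_left_cancel₀ (l' g).ne_zero e8).symm
    apply pow_inj_of_infinite (N := N)
    intro z
    have := hinv (Function.update (1 : B → Nˣ) (g • b) z)
    have e9 : (fun b' => Units.map (g.symm : N →* N) (Function.update (1 : B → Nˣ) (g • b) z (g • b')))
        = Function.update (1 : B → Nˣ) b (Units.map (g.symm : N →* N) z) := by
      ext1 b'
      by_cases hb : b' = b
      · subst hb; simp
      · rw [Function.update_of_ne hb, Function.update_of_ne (fun h => hb (smul_left_cancel g h))]
        simp
    rw [e9, wchar_update, wchar_update] at this
    apply Units.ext
    rw [this]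
    simp
  · intro g h
    have := hcoc g h
    rw [hl', hl', hl', ghat_C, sact_C, wchar_inv, ← C_mul, ← C_mul, ← C_mul] at this
    have h3 := C_injective (B × Fin p) N this
    rw [mul_comm, h3]
    ring

end KernelB


section KernelC
open MvPolynomial
variable {F N : Type*} [Field F] [Field N] [Algebra F N] {p : ℕ}
  {B I : Type*} [MulAction (N ≃ₐ[F] N) B] {ind : B → I}

lemma wchar_orbits 
    (hcard : ∀ q, Nat.card {b // ind b = q} = p)
    (htrans : ∀ b b', ind b = ind b' → ∃ g : N ≃ₐ[F] N, g • b = b')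
    (n : B →₀ ℕ) (hn : ∀ (g : N ≃ₐ[F] N) b, n (g • b) = n b) :
    ∃ (S0 : Finset I) (k : I → ℕ), ∀ c : I → Nˣ,
      wchar n (fun b => c (ind b)) = ∏ q ∈ S0, c q ^ (p * k q) := by
  classical
  have hdvd : ∀ q, p ∣ ∑ b ∈ n.support with ind b = q, n b := by
    intro q
    by_cases hq : ∃ b0 ∈ n.support, ind b0 = q
    · obtain ⟨b0, hb0, rfl⟩ := hq
      have hconst : ∀ b, ind b = ind b0 → n b = n b0 := by
        intro b hb
        obtain ⟨g, rfl⟩ := htrans b0 b hb.symm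
        exact hn g b0
      have hfs : (n.support.filter (fun b => ind b = ind b0)).card = p := by
        rw [← hcard (ind b0)]
        refine (Nat.subtype_card _ fun b => ?_).symm
        rw [Finset.mem_filter]
        refine ⟨fun h => h.2, fun h => ⟨?_, h⟩⟩
        rw [Finsupp.mem_support_iff, hconst b h]
        exact Finsupp.mem_support_iff.1 hb0
      rw [Finset.sum_congr rfl (g := fun _ => n b0)
        (fun b hb => hconst b (Finset.mem_filter.1 hb).2), Finset.sum_const, hfs]
      exact Dvd.intro _ rfl
    · have : n.support.filter (fun b => ind b = q) = ∅ := by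
        ext b
        simp only [Finset.mem_filter]
        constructor
        · rintro ⟨h1, h2⟩; exact absurd ⟨b, h1, h2⟩ hq
        · intro h; simp at h
      rw [this]
      simp
  choose k hk using hdvd
  refine ⟨n.support.image ind, k, fun c => ?_⟩
  rw [wchar, Finsupp.prod, ← Finset.prod_fiberwise_of_maps_to
    (t := n.support.image ind) (g := ind) (fun b hb => Finset.mem_image_of_mem _ hb)]
  refine Finset.prod_congr rfl fun q _ => ?_
  rw [← hk, ← Finset.prod_pow_eq_pow_sum]
  refine Finset.prod_congr rfl fun b hb => ?_
  rw [(Finset.mem_filter.1 hb).2]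


lemma PData.det_mul (D : PData F N p) (g h : N ≃ₐ[F] N) :
    (D.P g).det * Units.map (g : N →* N) (D.P h).det = D.c g h ^ p * (D.P (g * h)).det := by
  have := congrArg Matrix.det (D.mul g h)
  rw [Matrix.det_mul, Matrix.det_smul, Fintype.card_fin] at this
  apply Units.ext
  have e : ((D.P h).val.map g).det = g (D.P h).val.det :=
    (RingHom.map_det (g : N →+* N) (D.P h).val).symm
  rw [e] at this
  exact this

variable (Y : I → PData F N p)
  (K : Type*) [Field K] [Algebra (MvPolynomial (B × Fin p) N) K]
  [IsFractionRing (MvPolynomial (B × Fin p) N) K] [Algebra F K]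
  [IsScalarTower F (MvPolynomial (B × Fin p) N) K]

set_option maxHeartbeats 1600000 in
theorem kernel_split [IsGalois F N] [IsSepClosed N] [Infinite N]
    (hind : ∀ (g : N ≃ₐ[F] N) b, ind (g • b) = ind b)
    (hcard : ∀ q, Nat.card {b // ind b = q} = p)
    (htrans : ∀ b b', ind b = ind b' → ∃ g : N ≃ₐ[F] N, g • b = b')
    (hstab : ∀ b : B, ∃ Z : Finset N, ∀ u : N ≃ₐ[F] N, (∀ z ∈ Z, u z = z) → u • b = b)
    {C' : Type*} [Ring C'] [Algebra F C'] [Algebra.IsCentral F C'] [IsSimpleRing C']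
    [FiniteDimensional F C'] {d : ℕ} (hd : 0 < d) (hC : Module.finrank F C' = d ^ 2)
    (r : C' →ₐ[F] Matrix (Fin d) (Fin d) K)
    (hr1 : ∀ x g, (r x).map (gK Y K hind g) = r x)
    (hr2 : ∀ x (a : B → Nˣ), (r x).map (sK (p := p) F K a) = r x) :
    Nonempty (C' →ₐ[F] Matrix (Fin d) (Fin d) F) := by
  classical
  obtain ⟨d', hd', hC', ⟨ρ⟩⟩ := exists_hom_sepClosed (F := F) (C := C') (K := N)
  obtain rfl : d = d' := Nat.pow_left_injective (n := 2) (by norm_num) (hC.symm.trans hC')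
  obtain ⟨W, hW⟩ := exists_pdata hd hC ρ
  obtain ⟨S, hprim, h1, h2⟩ := kernel_primitive Y K hind hd hC ρ W hW r hr1 hr2
  obtain ⟨l, n, hl, hn, hcoc⟩ := kernel_consts Y hind W S hprim h1 h2
  obtain ⟨S0, k, hS0⟩ := wchar_orbits hcard htrans n hn
  choose Zb hZb using hstab
  let ε : (N ≃ₐ[F] N) → Nˣ := fun g => ∏ q ∈ S0, ((Y q).P g).det ^ k q
  have hε : ∀ g h, ε g * Units.map (g : N →* N) (ε h) =
      wchar n (fun b => (Y (ind b)).c g h) * ε (g * h) := by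
    intro g h
    rw [hS0 (fun q => (Y q).c g h)]
    simp only [ε, map_prod, map_pow, ← Finset.prod_mul_distrib, pow_mul, ← mul_pow,
      PData.det_mul]
  let κ : (N ≃ₐ[F] N) → Nˣ := fun g => ε g * l g
  have hl' : ∀ g h, l g * Units.map (g : N →* N) (l h) =
      W.c g h * (wchar n fun b => (Y (ind b)).c g h)⁻¹ * l (g * h) := by
    intro g h
    apply Units.ext
    exact hcoc g h
  have hκ : ∀ g h, κ g * Units.map (g : N →* N) (κ h) = W.c g h * κ (g * h) := by
    intro g h
    calc κ g * Units.map (g : N →* N) (κ h) = (ε g * Units.map (g : N →* N) (ε h)) *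
          (l g * Units.map (g : N →* N) (l h)) := by
          simp only [κ, map_mul]
          exact mul_mul_mul_comm _ _ _ _
      _ = W.c g h * κ (g * h) := by
          rw [hε, hl']
          simp only [κ]
          generalize (wchar n fun b => (Y (ind b)).c g h) = w
          rw [mul_mul_mul_comm, ← mul_assoc, ← mul_assoc, mul_comm w (W.c g h)]
          simp [mul_assoc]
  let P' : (N ≃ₐ[F] N) → Matrix.GeneralLinearGroup (Fin d) N := fun g => (κ g)⁻¹ • W.P g
  have hP' : ∀ g, (P' g).val = ((κ g)⁻¹ : Nˣ).val • (W.P g).val := fun g => rfl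
  let Z : Finset N := W.Z ∪ (S0.biUnion fun q => (Y q).Z) ∪
    (Finset.univ.biUnion fun ij : Fin d × Fin d =>
      ((S ij.1 ij.2).support.image fun m => coeff m (S ij.1 ij.2)) ∪
      ((S ij.1 ij.2).vars.biUnion fun v => Zb v.1 ∪ (Y (ind v.1)).Z))
  refine descent ρ P' ?_ ?_ Z ?_
  · intro g x
    rw [hP', Matrix.mul_smul, Matrix.smul_mul, hW]
  · intro g h
    have e1 : ((P' h).val.map g) = (Units.map (g : N →* N) (κ h)⁻¹).val • (W.P h).val.map g := by
      ext i j
      simp [hP']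
    rw [e1, hP', hP', Matrix.smul_mul, Matrix.mul_smul, smul_smul, W.mul, smul_smul]
    congr 1
    rw [← Units.val_mul, ← Units.val_mul]
    congr 1
    rw [map_inv, ← mul_inv, hκ]
    simp
  · intro u hu
    have hWu : W.P u = 1 := W.smooth u fun z hz => hu z (by simp [Z, hz])
    have hε1 : ε u = 1 := by
      refine Finset.prod_eq_one fun q hq => ?_
      have : (Y q).P u = 1 := (Y q).smooth u fun z hz => hu z (by
        simp only [Z, Finset.mem_union, Finset.mem_biUnion]
        exact Or.inl (Or.inr ⟨q, hq, hz⟩))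
      rw [this]
      simp
    have hSu : S.map (ghat ind Y u) = S := by
      ext1 i j
      rw [Matrix.map_apply]
      have hsub : ∀ z, z ∈ ((S i j).support.image fun m => coeff m (S i j)) ∪
          ((S i j).vars.biUnion fun v => Zb v.1 ∪ (Y (ind v.1)).Z) → u z = z := by
        intro z hz
        apply hu
        simp only [Z]
        refine Finset.mem_union_right _ (Finset.mem_biUnion.2 ⟨(i, j), Finset.mem_univ _, hz⟩)
      apply ghat_fix
      · intro m
        by_cases hm : m ∈ (S i j).support
        · exact hsub _ (Finset.mem_union_left _ (Finset.mem_image_of_mem _ hm))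
        · rw [notMem_support_iff.1 hm, map_zero]
      · intro v hv
        exact hZb _ _ fun z hz => hsub z (Finset.mem_union_right _
          (Finset.mem_biUnion.2 ⟨v, hv, Finset.mem_union_left _ hz⟩))
      · intro v hv
        exact (Y (ind v.1)).smooth _ fun z hz => hsub z (Finset.mem_union_right _
          (Finset.mem_biUnion.2 ⟨v, hv, Finset.mem_union_right _ hz⟩))
    have hl1 : l u = 1 := by
      have h3 := hl u
      have e1 : (1 : Matrix.GeneralLinearGroup (Fin d) N).val.map (C (σ := B × Fin p)) = 1 :=
        Matrix.map_one _ (map_zero _) (map_one _)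
      rw [hWu, hSu, e1, one_mul] at h3
      obtain ⟨i0, j0, hne⟩ : ∃ i j, S i j ≠ 0 := by
        by_contra hcon
        push Not at hcon
        exact not_isUnit_zero (hprim 0 fun i j => by rw [hcon i j])
      have h4 := congrFun (congrFun h3 i0) j0
      rw [Matrix.smul_apply, smul_eq_mul] at h4
      have h5 := mul_right_cancel₀ hne ((one_mul _).trans h4)
      rw [← C_1] at h5
      exact Units.ext (C_injective (B × Fin p) N h5).symm
    have : κ u = 1 := by simp only [κ, hε1, hl1, one_mul]
    change (κ u)⁻¹ • W.P u = 1
    rw [this, hWu]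
    simp

end KernelC


lemma conj_fixed {K : Type*} [Field K] {d : ℕ} (φ : K →+* K)
    (S : Matrix.GeneralLinearGroup (Fin d) K) (R Q : Matrix (Fin d) (Fin d) K)
    (hS : Q * S.val.map φ = S.val) (hR : R * Q = Q * R.map φ) :
    (S⁻¹.val * R * S.val).map φ = S⁻¹.val * R * S.val := by
  have e1 : S.val * (S⁻¹.val * R * S.val) = R * S.val := by
    rw [← mul_assoc, ← mul_assoc, Units.mul_inv, one_mul]
  have e2 : S.val * (S⁻¹.val * R * S.val).map φ = R * S.val := by
    have e3 := congrArg (fun M => M.map φ) e1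
    simp only [Matrix.map_mul] at e3
    have e4 := congrArg (fun M => Q * M) e3
    simp only [← mul_assoc, hS, ← hR] at e4
    rw [mul_assoc R, hS] at e4
    rw [← e4]
    simp only [Matrix.map_mul, ← mul_assoc]
  exact S.isUnit.mul_left_cancel (e2.trans e1.symm)

section SplitHom
open MvPolynomial
variable {F N : Type*} [Field F] [Field N] [Algebra F N] {p : ℕ}
  {B I : Type*} [MulAction (N ≃ₐ[F] N) B] {ind : B → I} (Y : I → PData F N p)
  (K : Type*) [Field K] [Algebra (MvPolynomial (B × Fin p) N) K]
  [IsFractionRing (MvPolynomial (B × Fin p) N) K] [Algebra F K]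
  [IsScalarTower F (MvPolynomial (B × Fin p) N) K]

variable (F N p B) in
/-- the constants -/
noncomputable def nuK : N →ₐ[F] K :=
  (IsScalarTower.toAlgHom F (MvPolynomial (B × Fin p) N) K).comp
    (IsScalarTower.toAlgHom F N (MvPolynomial (B × Fin p) N))

lemma nuK_apply (z : N) : nuK F N p B K z = algebraMap (MvPolynomial (B × Fin p) N) K (C z) := rfl

lemma gK_nuK (hind : ∀ (g : N ≃ₐ[F] N) b, ind (g • b) = ind b) (g : N ≃ₐ[F] N) (z : N) :
    gK Y K hind g (nuK F N p B K z) = nuK F N p B K (g z) := by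
  rw [nuK_apply, gK_algebraMap, ghat_C, nuK_apply]

lemma sK_nuK (a : B → Nˣ) (z : N) :
    sK (p := p) F K a (nuK F N p B K z) = nuK F N p B K z := by
  rw [nuK_apply, sK_algebraMap, sact_C]

lemma split_hom (hind : ∀ (g : N ≃ₐ[F] N) b, ind (g • b) = ind b) (hp : 0 < p) (b0 : B)
    {D : Type*} [Ring D] [Algebra F D] [Algebra.IsCentral F D] [IsSimpleRing D]
    [FiniteDimensional F D] (hD : Module.finrank F D = p ^ 2)
    (ρ : D →ₐ[F] Matrix (Fin p) (Fin p) N)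
    (hρ : ∀ g x, ρ x * ((Y (ind b0)).P g).val = ((Y (ind b0)).P g).val * (ρ x).map g)
    (M : IntermediateField F K)
    (hM : ∀ f : K, (∀ a : B → Nˣ, sK (p := p) F K a f = f) →
      (∀ h : N ≃ₐ[F] N, h • b0 = b0 → gK Y K hind h f = f) → f ∈ M) :
    Nonempty (D →ₐ[F] Matrix (Fin p) (Fin p) M) := by
  classical
  let ν := nuK F N p B K
  let ρK : D →ₐ[F] Matrix (Fin p) (Fin p) K := ν.mapMatrix.comp ρ
  have hρK : ∀ x, ρK x = (ρ x).map ν := fun x => rfl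
  let v : Fin p → K := fun k => algebraMap (MvPolynomial (B × Fin p) N) K (X (b0, k))
  have hv : ∀ k, v k ≠ 0 := by
    intro k h
    have := (IsFractionRing.injective (MvPolynomial (B × Fin p) N) K) (h.trans (map_zero _).symm)
    exact X_ne_zero _ this
  obtain ⟨S, hS⟩ := exists_invertible_cols (Set.range fun x => (ρK x).mulVec v) (by
    intro w hw
    have key : ∀ A : Matrix (Fin p) (Fin p) K, ∑ i, w i * A.mulVec v i = 0 := by
      intro A
      obtain ⟨y, rfl⟩ := (extHom_bijective hp hD ρK).2 A
      induction y using TensorProduct.induction_on with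
      | zero => simp
      | tmul k x =>
        rw [extHom_tmul, Matrix.smul_mulVec]
        have := hw _ ⟨x, rfl⟩
        simp only [Pi.smul_apply, smul_eq_mul, mul_left_comm _ k, ← Finset.mul_sum]
        rw [this, mul_zero]
      | add y z hy hz =>
        rw [map_add, Matrix.add_mulVec]
        simp only [Pi.add_apply, mul_add, Finset.sum_add_distrib, hy, hz, add_zero]
    ext i
    have h1 := key (Matrix.single i i 1)
    rw [Finset.sum_eq_single i] at h1
    · have h2 : (Matrix.single i i (1:K)).mulVec v i = v i := by
        simp [Matrix.single_mulVec]
      rw [h2] at h1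
      exact (mul_eq_zero.1 h1).resolve_right (hv i)
    · intro j _ hj
      simp [Matrix.single_mulVec, hj]
    · simp)
  refine descend_hom M.val M.val.injective ρK S ?_
  intro x i k
  suffices (S⁻¹.val * ρK x * S.val) i k ∈ M from ⟨⟨_, this⟩, rfl⟩
  apply hM
  · intro a
    have : (S⁻¹.val * ρK x * S.val).map (sK (p := p) F K a : K →+* K) = S⁻¹.val * ρK x * S.val := by
      refine conj_fixed _ S (ρK x) ((ν (a b0))⁻¹ • (1 : Matrix (Fin p) (Fin p) K)) ?_ ?_
      · ext i k
        obtain ⟨y, hy⟩ := hS k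
        have hy' : ∀ i, S.val i k = ∑ l, ν (ρ y i l) * v l := fun i => (congrFun hy i).symm
        have ha : ν (a b0) ≠ 0 := by simp
        rw [Matrix.smul_mul, one_mul, Matrix.smul_apply, Matrix.map_apply, hy', smul_eq_mul,
          inv_mul_eq_iff_eq_mul₀ ha]
        simp only [RingHom.coe_coe, map_sum, map_mul, Finset.mul_sum]
        refine Finset.sum_congr rfl fun l _ => ?_
        rw [sK_nuK]
        have : sK (p := p) F K a (v l) = ν (a b0) * v l := by
          simp only [v, sK_algebraMap, sact_X, map_mul]
          rfl
        rw [this]; ring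
      · have : (ρK x).map (sK (p := p) F K a : K →+* K) = ρK x := by
          ext i j
          exact sK_nuK K a _
        rw [this, Matrix.mul_smul, Matrix.smul_mul, one_mul, mul_one]
    exact congrFun (congrFun this i) k
  · intro h hh
    have : (S⁻¹.val * ρK x * S.val).map (gK Y K hind h : K →+* K) = S⁻¹.val * ρK x * S.val := by
      have hc : ∀ y, ρK y * ((Y (ind b0)).P h).val.map ν =
          ((Y (ind b0)).P h).val.map ν * (ρK y).map (gK Y K hind h : K →+* K) := by
        intro y
        have h1 : (ρK y).map (gK Y K hind h : K →+* K) = ((ρ y).map h).map ν := by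
          ext i j
          exact gK_nuK Y K hind h _
        rw [h1, hρK, ← Matrix.map_mul, ← Matrix.map_mul, hρ]
      refine conj_fixed _ S (ρK x) (((Y (ind b0)).P h).val.map ν) ?_ (hc x)
      have hvv : (((Y (ind b0)).P h).val.map ν).mulVec (fun l => gK Y K hind h (v l)) = v := by
        ext k
        have := congrArg (algebraMap (MvPolynomial (B × Fin p) N) K) (ghat_vec ind Y h b0 k)
        rw [hh, map_sum] at this
        simp only [map_mul, ← gK_algebraMap Y K hind] at this
        exact this
      ext i k
      obtain ⟨y, hy⟩ := hS k
      have hcol : ∀ i, S.val i k = (ρK y).mulVec v i := fun i => (congrFun hy i).symm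
      have h2 : (fun j => (S.val.map (gK Y K hind h : K →+* K)) j k) =
          ((ρK y).map (gK Y K hind h : K →+* K)).mulVec (fun l => gK Y K hind h (v l)) := by
        ext j
        rw [Matrix.map_apply, hcol]
        simp [Matrix.mulVec, dotProduct]
      have h3 : (((Y (ind b0)).P h).val.map ν * S.val.map (gK Y K hind h : K →+* K)) i k =
          (((Y (ind b0)).P h).val.map ν).mulVec
            (fun j => (S.val.map (gK Y K hind h : K →+* K)) j k) i := rfl
      rw [h3, h2, Matrix.mulVec_mulVec, ← hc, ← Matrix.mulVec_mulVec, hvv, hcol]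
    exact congrFun (congrFun this i) k

end SplitHom


section Comp
variable {F N : Type*} [Field F] [Field N] [Algebra F N] {p : ℕ}
  {B I : Type*} [MulAction (N ≃ₐ[F] N) B] {ind : B → I} (Y : I → PData F N p)
  (K : Type*) [Field K] [Algebra (MvPolynomial (B × Fin p) N) K]
  [IsFractionRing (MvPolynomial (B × Fin p) N) K] [Algebra F K]
  [IsScalarTower F (MvPolynomial (B × Fin p) N) K]

lemma compositum_poly [Normal F N] (hind : ∀ (g : N ≃ₐ[F] N) b, ind (g • b) = ind b)
    {L : Type*} [Field L] [Algebra F L] [FiniteDimensional F L] (t0 : L →ₐ[F] N) (θ : L)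
    (hθ : Function.Injective fun t : L →ₐ[F] N => t θ) (f : K)
    (hs : ∀ a : B → Nˣ, sK (p := p) F K a f = f)
    (hg : ∀ h : N ≃ₐ[F] N, (∀ x, h (t0 x) = t0 x) → gK Y K hind h f = f) :
    ∃ q : Polynomial K, (∀ k, (∀ a : B → Nˣ, sK (p := p) F K a (q.coeff k) = q.coeff k) ∧
      (∀ g, gK Y K hind g (q.coeff k) = q.coeff k)) ∧
      q.eval (nuK F N p B K (t0 θ)) = f := by
  classical
  let ν := nuK F N p B K
  have hν : Function.Injective ν := ν.injective
  choose gl hgl using fun t : L →ₐ[F] N => exists_lift t0 t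
  let v : (L →ₐ[F] N) → K := fun t => ν (t θ)
  have hv : Set.InjOn v (Finset.univ : Finset (L →ₐ[F] N)) :=
    fun t _ t' _ h => hθ (hν h)
  let r : (L →ₐ[F] N) → K := fun t => gK Y K hind (gl t) f
  have hr : ∀ (g : N ≃ₐ[F] N) (t : L →ₐ[F] N), (∀ x, g (t0 x) = t x) → gK Y K hind g f = r t := by
    intro g t h
    have h1 : gK Y K hind ((gl t)⁻¹ * g) f = f := by
      apply hg
      intro x
      change (gl t).symm (g (t0 x)) = _
      rw [AlgEquiv.symm_apply_eq, h, hgl]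
    have h2 := gK_gK Y K hind (gl t) ((gl t)⁻¹ * g) f
    rw [h1, mul_inv_cancel_left, sK_gK, hs] at h2
    exact h2.symm
  have hrs : ∀ t (a : B → Nˣ), sK (p := p) F K a (r t) = r t := by
    intro t a
    simp only [r]
    rw [sK_gK, hs]
  have hrg : ∀ g t, gK Y K hind g (r t) = r (g.toAlgHom.comp t) := by
    intro g t
    simp only [r]
    rw [gK_gK, sK_gK, hs]
    apply hr
    intro x
    change g (gl t (t0 x)) = g (t x)
    rw [hgl]
  let q := Lagrange.interpolate Finset.univ v r
  have hq := (Lagrange.eq_interpolate_iff (f := q) (r := r) hv).2 rfl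
  refine ⟨q, fun k => ⟨fun a => ?_, fun g => ?_⟩, ?_⟩
  · have : q.map (sK (p := p) F K a : K →+* K) = q := by
      refine (Lagrange.eq_interpolate_iff (r := r) hv).1
        ⟨lt_of_le_of_lt Polynomial.degree_map_le hq.1, fun t ht => ?_⟩
      have h1 : v t = (sK (p := p) F K a : K →+* K) (v t) := (sK_nuK K a _).symm
      rw [h1, Polynomial.eval_map_apply, hq.2 t ht]
      exact hrs t a
    have h2 := congrArg (fun P => P.coeff k) this
    simp only [Polynomial.coeff_map] at h2
    exact h2
  · have : q.map (gK Y K hind g : K →+* K) = q := by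
      refine (Lagrange.eq_interpolate_iff (r := r) hv).1
        ⟨lt_of_le_of_lt Polynomial.degree_map_le hq.1, fun t ht => ?_⟩
      have h1 : v t = (gK Y K hind g : K →+* K) (v (g.symm.toAlgHom.comp t)) := by
        refine Eq.trans ?_ (gK_nuK Y K hind g _).symm
        simp [v, ν]
      rw [h1, Polynomial.eval_map_apply, hq.2 _ (Finset.mem_univ _)]
      refine (hrg g _).trans ?_
      congr 1
      ext x
      simp
    have h2 := congrArg (fun P => P.coeff k) this
    simp only [Polynomial.coeff_map] at h2
    exact h2
  · refine (hq.2 t0 (Finset.mem_univ _)).trans ?_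
    rw [← hr 1 t0 (fun x => rfl), gK_one]

end Comp

section FieldFacts

lemma sep_of_prime_degree {p : ℕ} (hp : p.Prime) (F L : Type*) [Field F] [Field L] [Algebra F L]
    (hchar : ringChar F ≠ p) (hL : Module.finrank F L = p) : Algebra.IsSeparable F L := by
  have : FiniteDimensional F L := Module.finite_of_finrank_pos (hL ▸ hp.pos)
  rw [isSeparable_iff_finInsepDegree_eq_one]
  obtain ⟨q, hq⟩ := ExpChar.exists F
  obtain ⟨n, hn⟩ := finInsepDegree_eq_pow F L q
  have h1 := Field.finSepDegree_mul_finInsepDegree F L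
  rw [hL] at h1
  rcases (Nat.dvd_prime hp).1 (Dvd.intro_left _ h1) with h | h
  · exact h
  · exfalso
    rw [hn] at h
    have hqp : q = p := by
      have h2 : q ∣ p := by
        rw [← h]
        refine dvd_pow_self q ?_
        rintro rfl
        exact hp.ne_one (by simpa using h.symm)
      rcases (Nat.dvd_prime hp).1 h2 with h3 | h3
      · rw [h3, one_pow] at h
        exact absurd h.symm hp.ne_one
      · exact h3
    subst hqp
    cases hq with
    | zero => exact hp.ne_one rfl
    | prime hq => exact hchar (ringChar.eq F q)

lemma splits_sepClosed {F L N : Type*} [Field F] [Field L] [Algebra F L] [Field N] [Algebra F N]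
    [IsSepClosed N] [Algebra.IsSeparable F L] (x : L) :
    ((minpoly F x).map (algebraMap F N)).Splits :=
  IsSepClosed.splits_of_separable _
    (Polynomial.Separable.map (Algebra.IsSeparable.isSeparable F x))

lemma infinite_sepClosed (N : Type*) [Field N] [IsSepClosed N] : Infinite N := by
  by_contra h
  rw [not_infinite_iff_finite] at h
  have : IsAlgClosed N := inferInstance
  exact not_finite N

end FieldFacts


/-- index set of the blocks of variables -/
def Blk (F N : Type*) [Field F] [Field N] [Algebra F N] {μ : Type*} (ι : Type*) (L : μ → Type*)
    [∀ j, Field (L j)] [∀ j, Algebra F (L j)] : Type _ :=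
  Σ q : ι × μ, (L q.2 →ₐ[F] N)

instance Blk.mulAction (F N : Type*) [Field F] [Field N] [Algebra F N] {μ : Type*} (ι : Type*)
    (L : μ → Type*) [∀ j, Field (L j)] [∀ j, Algebra F (L j)] :
    MulAction (N ≃ₐ[F] N) (Blk F N ι L) where
  smul g b := ⟨b.1, g.toAlgHom.comp b.2⟩
  one_smul _ := rfl
  mul_smul _ _ _ := rfl

lemma resInjP_of_kernel (p : ℕ) {F E : Type u} [Field F] [Field E] [Algebra F E]
    (H : ∀ (C : Type u) [Ring C] [Algebra F C] [Algebra.IsCentral F C] [IsSimpleRing C]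
      [FiniteDimensional F C] (d : ℕ), 0 < d → Module.finrank F C = d ^ 2 →
      (C →ₐ[F] Matrix (Fin d) (Fin d) E) → Nonempty (C →ₐ[F] Matrix (Fin d) (Fin d) F)) :
    ResInjP p F E (algebraMap F E) := by
  rename_i i
  have he : (algebraMap F E).toAlgebra = i := Algebra.algebra_ext _ _ fun _ => rfl
  have key : ∀ inst : Algebra F E, inst = i →
      ∀ (A B : Type u) [Ring A] [Algebra F A] [Ring B] [Algebra F B],
        IsCSA F A → IsCSA F B → IsPTorsion F A p → IsPTorsion F B p →
        BrauerEquiv E (E ⊗[F] A) (E ⊗[F] B) → BrauerEquiv F A B := by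
    rintro _ rfl A B _ _ _ _ hA hB _ _ hAB
    exact res_inj_of_kernel H A B hA hB hAB
  exact key _ he

theorem main_aux (p : ℕ) (hp : p.Prime)
    (F : Type u) [Field F] (hchar : ringChar F ≠ p) {ι μ : Type u}
    (D : ι → Type u) [∀ i, DivisionRing (D i)] [∀ i, Algebra F (D i)]
    (hD : ∀ i, IsCentralDivisionOfDeg F (D i) p)
    (L : μ → Type u) [∀ j, Field (L j)] [∀ j, Algebra F (L j)]
    (hL : ∀ j, Module.finrank F (L j) = p)
    (N : Type u) [Field N] [Algebra F N] [IsGalois F N] [IsSepClosed N]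
    (K : Type u) [Field K] [Algebra (MvPolynomial (Blk F N ι L × Fin p) N) K]
    [IsFractionRing (MvPolynomial (Blk F N ι L × Fin p) N) K] [Algebra F K]
    [IsScalarTower F (MvPolynomial (Blk F N ι L × Fin p) N) K] :
    Nonempty (SplittingExtensionFamily p F D L) := by
  classical
  have : Infinite N := infinite_sepClosed N
  have hfin : ∀ j, FiniteDimensional F (L j) := fun j =>
    Module.finite_of_finrank_pos (hL j ▸ hp.pos)
  have hsep : ∀ j, Algebra.IsSeparable F (L j) := fun j =>
    sep_of_prime_degree hp F (L j) hchar (hL j)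
  have hcen : ∀ i, Algebra.IsCentral F (D i) := fun i => (hD i).1
  have hDfin : ∀ i, FiniteDimensional F (D i) := fun i => (hD i).2.1
  have hDrk : ∀ i, Module.finrank F (D i) = p ^ 2 := fun i => (hD i).2.2
  have hTcard : ∀ j, Nat.card (L j →ₐ[F] N) = p := by
    intro j
    rw [Nat.card_eq_fintype_card, AlgHom.card_of_splits F (L j) N splits_sepClosed, hL j]
  have hTne : ∀ j, Nonempty (L j →ₐ[F] N) := fun j =>
    (Nat.card_pos_iff.1 (by rw [hTcard j]; exact hp.pos)).1
  let t0 : ∀ j, L j →ₐ[F] N := fun j => (hTne j).some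
  choose θ hθ using fun j => Field.exists_primitive_element F (L j)
  have hθ' : ∀ j, Function.Injective fun t : L j →ₐ[F] N => t (θ j) := fun j =>
    (Field.primitive_element_iff_algHom_eq_of_eval' F N splits_sepClosed (θ j)).1 (hθ j)
  have hρ : ∀ i, Nonempty (D i →ₐ[F] Matrix (Fin p) (Fin p) N) := by
    intro i
    obtain ⟨d, hd, hd2, h⟩ := exists_hom_sepClosed (F := F) (C := D i) (K := N)
    obtain rfl : p = d := Nat.pow_left_injective (n := 2) (by norm_num) ((hDrk i).symm.trans hd2)
    exact h
  let ρ := fun i => (hρ i).some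
  choose Y0 hY0 using fun i => exists_pdata hp.pos (hDrk i) (ρ i)
  let B := Blk F N ι L
  let ind : B → ι × μ := Sigma.fst
  let Y : ι × μ → PData F N p := fun q => Y0 q.1
  have hind : ∀ (g : N ≃ₐ[F] N) (b : B), ind (g • b) = ind b := fun g b => rfl
  let SE : Set (K →ₐ[F] K) :=
    (Set.range fun a : B → Nˣ => sK (p := p) F K a) ∪ Set.range fun g => gK Y K hind g
  let SM : μ → Set (K →ₐ[F] K) := fun j =>
    (Set.range fun a : B → Nˣ => sK (p := p) F K a) ∪
      {φ | ∃ g : N ≃ₐ[F] N, (∀ x, g (t0 j x) = t0 j x) ∧ φ = gK Y K hind g}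
  let E : IntermediateField F K := fixF SE
  let M : μ → IntermediateField F K := fun j => fixF (SM j)
  have hEM : ∀ j, E ≤ M j := by
    intro j f hf φ hφ
    rcases hφ with hφ | ⟨g, _, rfl⟩
    · exact hf φ (Or.inl hφ)
    · exact hf _ (Or.inr ⟨g, rfl⟩)
  have hMmem : ∀ j (f : K), (∀ a : B → Nˣ, sK (p := p) F K a f = f) →
      (∀ h : N ≃ₐ[F] N, (∀ x, h (t0 j x) = t0 j x) → gK Y K hind h f = f) → f ∈ M j := by
    intro j f h1 h2 φ hφ
    rcases hφ with ⟨a, rfl⟩ | ⟨g, hg, rfl⟩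
    · exact h1 a
    · exact h2 g hg
  let ν := nuK F N p B K
  let lam : ∀ j, L j →ₐ[F] M j := fun j => (ν.comp (t0 j)).codRestrict (M j).toSubalgebra (by
    intro x
    refine hMmem j _ (fun a => sK_nuK K a _) fun h hh => ?_
    refine (gK_nuK Y K hind h _).trans ?_
    exact congrArg ν (hh x))
  have hcardB : ∀ q, Nat.card {b : B // ind b = q} = p := by
    intro q
    rw [← hTcard q.2]
    refine Nat.card_congr
      { toFun := fun b => b.2 ▸ b.1.2
        invFun := fun t => ⟨⟨q, t⟩, rfl⟩
        left_inv := ?_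
        right_inv := fun t => rfl }
    rintro ⟨⟨q', t⟩, rfl⟩
    rfl
  have htrans : ∀ b b' : B, ind b = ind b' → ∃ g : N ≃ₐ[F] N, g • b = b' := by
    rintro ⟨q, t⟩ ⟨q', t'⟩ h
    obtain rfl : q = q' := h
    obtain ⟨g, hg⟩ := exists_lift t t'
    refine ⟨g, ?_⟩
    change (⟨q, g.toAlgHom.comp t⟩ : Σ q : ι × μ, (L q.2 →ₐ[F] N)) = ⟨q, t'⟩
    congr 1
    ext x
    exact hg x
  have hstab : ∀ b : B, ∃ Z : Finset N, ∀ u : N ≃ₐ[F] N, (∀ z ∈ Z, u z = z) → u • b = b := by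
    rintro ⟨q, t⟩
    refine ⟨{t (θ q.2)}, fun u hu => ?_⟩
    change (⟨q, u.toAlgHom.comp t⟩ : Σ q : ι × μ, (L q.2 →ₐ[F] N)) = ⟨q, t⟩
    congr 1
    exact hθ' q.2 (hu _ (Finset.mem_singleton_self _))
  have hres : ResInjP p F E (algebraMap F E) := by
    apply resInjP_of_kernel
    intro C _ _ _ _ _ d hd hC r
    refine kernel_split Y K hind hcardB htrans hstab hd hC (E.val.mapMatrix.comp r) ?_ ?_
    · intro x g
      ext i j
      exact (r x i j).2 _ (Or.inr ⟨g, rfl⟩)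
    · intro x a
      ext i j
      exact (r x i j).2 _ (Or.inl ⟨a, rfl⟩)
  let algEM : ∀ j, Algebra E (M j) := fun j => (IntermediateField.inclusion (hEM j)).toRingHom.toAlgebra
  let algLM : ∀ j, Algebra (L j) (M j) := fun j => (lam j).toRingHom.toAlgebra
  have tow1 : ∀ j, IsScalarTower F E (M j) := fun j =>
    IsScalarTower.of_algebraMap_eq fun x => ((IntermediateField.inclusion (hEM j)).commutes x).symm
  have tow2 : ∀ j, IsScalarTower F (L j) (M j) := fun j =>
    IsScalarTower.of_algebraMap_eq fun x => ((lam j).commutes x).symm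
  have hsplit : ∀ i j, IsSplit (M j) ((M j) ⊗[F] (D i)) := by
    intro i j
    obtain ⟨r⟩ := split_hom Y K hind hp.pos (⟨(i, j), t0 j⟩ : B) (hDrk i) (ρ i) (hY0 i) (M j) (by
      intro f h1 h2
      refine hMmem j f h1 fun h hh => h2 h ?_
      change (⟨(i, j), h.toAlgHom.comp (t0 j)⟩ : Σ q : ι × μ, (L q.2 →ₐ[F] N)) = ⟨(i, j), t0 j⟩
      congr 1
      ext x
      exact hh x)
    exact isSplit_of_hom hp.pos (hDrk i) r
  have hcomp : ∀ j, Algebra.adjoin E (Set.range (algebraMap (L j) (M j))) = ⊤ := by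
    intro j
    rw [eq_top_iff]
    rintro f -
    obtain ⟨q, hq1, hq2⟩ := compositum_poly Y K hind (t0 j) (θ j) (hθ' j) (f : K)
      (fun a => f.2 _ (Or.inl ⟨a, rfl⟩)) (fun h hh => f.2 _ (Or.inr ⟨h, hh, rfl⟩))
    have hqE : ∀ k, q.coeff k ∈ E := by
      intro k φ hφ
      rcases hφ with ⟨a, rfl⟩ | ⟨g, rfl⟩
      · exact (hq1 k).1 a
      · exact (hq1 k).2 g
    have hf : f = ∑ k ∈ Finset.range (q.natDegree + 1),
        (⟨q.coeff k, hqE k⟩ : E) • (algebraMap (L j) (M j) (θ j)) ^ k := by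
      apply Subtype.ext
      rw [← hq2, Polynomial.eval_eq_sum_range]
      have : ∀ s : Finset ℕ, ((∑ k ∈ s, (⟨q.coeff k, hqE k⟩ : E) •
          (algebraMap (L j) (M j) (θ j)) ^ k : M j) : K) =
          ∑ k ∈ s, q.coeff k * (nuK F N p B K (t0 j (θ j))) ^ k := by
        intro s
        rw [← IntermediateField.coe_val, map_sum]
        refine Finset.sum_congr rfl fun k _ => ?_
        rw [Algebra.smul_def, map_mul, map_pow]
        rfl
      exact (this _).symm
    rw [hf]
    refine Subalgebra.sum_mem _ fun k _ => Subalgebra.smul_mem _ (Subalgebra.pow_mem _ ?_ _) _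
    exact Algebra.subset_adjoin ⟨_, rfl⟩
  exact ⟨{
    E := E
    resInj := hres
    N := fun _ j => M j
    algEN := fun _ j => algEM j
    algLN := fun _ j => algLM j
    towerE := fun _ j => tow1 j
    towerL := fun _ j => tow2 j
    compositum := fun _ j => hcomp j
    splits := hsplit }⟩

theorem main_aux2 (p : ℕ) (hp : p.Prime)
    (F : Type u) [Field F] (hchar : ringChar F ≠ p) {ι μ : Type u}
    (D : ι → Type u) [∀ i, DivisionRing (D i)] [∀ i, Algebra F (D i)]
    (hD : ∀ i, IsCentralDivisionOfDeg F (D i) p)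
    (L : μ → Type u) [∀ j, Field (L j)] [∀ j, Algebra F (L j)]
    (hL : ∀ j, Module.finrank F (L j) = p) :
    Nonempty (SplittingExtensionFamily p F D L) :=
  main_aux p hp F hchar D hD L hL (SeparableClosure F)
    (FractionRing (MvPolynomial (Blk F (SeparableClosure F) ι L × Fin p) (SeparableClosure F)))


/-- for a set `A = {D i}` of central division `F`-algebras of degree `p` and a
set `S = {L j}` of degree-`p` extensions of `F` (char `F ≠ p`), there is `E/F` with
`Br(F)[p] → Br(E)[p]` injective such that each compositum `E·(L j)` splits each `(D i) ⊗_F E`. -/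
theorem exists_splitting_extension_family (p : ℕ) (hp : p.Prime)
    (F : Type u) [Field F] (hchar : ringChar F ≠ p) {ι μ : Type u}
    (D : ι → Type u) [∀ i, DivisionRing (D i)] [∀ i, Algebra F (D i)]
    (hD : ∀ i, IsCentralDivisionOfDeg F (D i) p)
    (L : μ → Type u) [∀ j, Field (L j)] [∀ j, Algebra F (L j)]
    (hL : ∀ j, Module.finrank F (L j) = p) :
    Nonempty (SplittingExtensionFamily p F D L) := by
  exact main_aux2 p hp F hchar D hD L hL
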